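/- arXiv:2204.13742 — 6 statements merged into one kernel-verified Lean document; each statement's English description precedes it below -/
import Mathlib

section
/- Let 𝒞 be a hereditary class of finite simple graphs all of whose members are circle graphs. Then 𝒞 has bounded twin-width if and only if 𝒞 does not contain all permutation graphs, i.e., if and only if there exists a permutation graph H such that no graph in 𝒞 is isomorphic to H. -/
open Finset

/-- Two finsets of vertices are homogeneous to each other in `G`:
either all pairs are adjacent or no pair is adjacent. -/
def IsHomog {V : Type} (G : SimpleGraph V) (A B : Finset V) : Prop :=
  (∀ a ∈ A, ∀ b ∈ B, G.Adj a b) ∨ (∀ a ∈ A, ∀ b ∈ B, ¬ G.Adj a b)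

/-- The red degree of a part `A` of a partition `P` of the vertices of `G`:
the number of other parts that are not homogeneous to `A`.  (Along a
contraction sequence, viewed as a sequence of partitions into contracted
groups, this is exactly the red degree of the contracted vertex `A` in the
corresponding trigraph.) -/
noncomputable def redDegree {V : Type} [Fintype V] [DecidableEq V] (G : SimpleGraph V)
    (P : Finpartition (univ : Finset V)) (A : Finset V) : ℕ :=
  letI := Classical.decPred fun B : Finset V => ¬ IsHomog G A B
  ((P.parts.erase A).filter fun B => ¬ IsHomog G A B).card

/-- `Q` is obtained from `P` by merging two distinct parts,
i.e. by one contraction. -/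
def IsMerge {V : Type} [Fintype V] [DecidableEq V]
    (P Q : Finpartition (univ : Finset V)) : Prop :=
  ∃ A ∈ P.parts, ∃ B ∈ P.parts, A ≠ B ∧
    Q.parts = insert (A ∪ B) ((P.parts.erase A).erase B)

/-- `G` admits a contraction sequence of width at most `d`: a sequence of
partitions starting at the discrete partition (all parts singletons), ending
at the partition with (at most) one part, each obtained from the previous by
merging two parts, with all red degrees at most `d` throughout. -/
def TwinWidthLE {V : Type} [Fintype V] [DecidableEq V] (G : SimpleGraph V) (d : ℕ) : Prop :=
  ∃ L : List (Finpartition (univ : Finset V)),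
    (∃ P₀, L.head? = some P₀ ∧ ∀ A ∈ P₀.parts, A.card = 1) ∧
    (∃ P₁, L.getLast? = some P₁ ∧ P₁.parts.card ≤ 1) ∧
    List.Chain' IsMerge L ∧
    ∀ P ∈ L, ∀ A ∈ P.parts, redDegree G P A ≤ d

/-- `G` is a circle graph (in its interval-overlap form): vertices carry
rational intervals with pairwise distinct endpoints, and distinct vertices are
adjacent iff their intervals overlap without containment. -/
def IsCircleGraph {n : ℕ} (G : SimpleGraph (Fin n)) : Prop :=
  ∃ l r : Fin n → ℚ,
    (∀ v, l v < r v) ∧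
    Function.Injective (fun p : Fin n × Bool => if p.2 then r p.1 else l p.1) ∧
    ∀ u v : Fin n, u ≠ v →
      (G.Adj u v ↔ (l u < l v ∧ l v < r u ∧ r u < r v) ∨ (l v < l u ∧ l u < r v ∧ r v < r u))

/-- `G` is a permutation graph: there are two linear orders on the vertex set
such that distinct vertices are adjacent iff the two orders order them
oppositely. -/
def IsPermutationGraph {n : ℕ} (G : SimpleGraph (Fin n)) : Prop :=
  ∃ L1 L2 : LinearOrder (Fin n), ∀ u v : Fin n, u ≠ v →
    (G.Adj u v ↔ (L1.lt u v ∧ L2.lt v u) ∨ (L1.lt v u ∧ L2.lt u v))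

/-- `H` is (isomorphic to) an induced subgraph of `G`. -/
def IsInducedSubgraphOf {m n : ℕ} (H : SimpleGraph (Fin m)) (G : SimpleGraph (Fin n)) : Prop :=
  ∃ f : Fin m ↪ Fin n, ∀ u v, H.Adj u v ↔ G.Adj (f u) (f v)

/-- A class of finite graphs (one set of graphs for each number of vertices)
is hereditary: closed under induced subgraphs and isomorphism. -/
def Hereditary (C : ∀ n : ℕ, Set (SimpleGraph (Fin n))) : Prop :=
  ∀ (m n : ℕ) (H : SimpleGraph (Fin m)) (G : SimpleGraph (Fin n)),
    G ∈ C n → IsInducedSubgraphOf H G → H ∈ C m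


def PatIn {ι : Type} {k : ℕ} (x y : ι → Fin k) (X : Finset (ℕ × ℕ)) : Prop :=
  ∃ p : ι → ℕ × ℕ, (∀ i, p i ∈ X) ∧ (∀ i j, x i < x j → (p i).1 < (p j).1) ∧
    (∀ i j, y i < y j → (p i).2 < (p j).2)

def blk (X : Finset (ℕ × ℕ)) (s : ℕ) (b : ℕ × ℕ) : Finset (ℕ × ℕ) :=
  X.filter fun p => p.1 / s = b.1 ∧ p.2 / s = b.2

lemma lt_of_div_lt {a b s : ℕ} (h : a / s < b / s) : a < b := by
  by_contra hc
  exact absurd (Nat.div_le_div_right (c := s) (not_lt.mp hc)) (not_le.mpr h)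

lemma mem_slab {a b s : ℕ} (hs : 0 < s) (h : a / s = b) : a ∈ Finset.Ico (b * s) (b * s + s) := by
  subst h
  have h1 := Nat.div_add_mod a s
  have h2 := Nat.mod_lt a hs
  rw [Finset.mem_Ico, mul_comm]
  omega

lemma wide_bound {ι : Type} {k s M : ℕ} (x y : ι → Fin k) (X : Finset (ℕ × ℕ)) (hs : 0 < s)
    (hav : ¬ PatIn x y X) (B : Finset (ℕ × ℕ))
    (hB : ∀ b ∈ B, b.2 < M ∧ k ≤ ((blk X s b).image Prod.snd).card) :
    B.card ≤ k * 2 ^ s * M := by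
  have h1 : B.card ≤ (k * 2 ^ s) * (B.image Prod.snd).card := by
    apply Finset.card_le_mul_card_image
    intro J _
    by_contra hlt
    push Not at hlt
    have hmap : ∀ b ∈ B.filter (fun b => b.2 = J),
        (blk X s b).image Prod.snd ∈ (Finset.Ico (J * s) (J * s + s)).powerset := by
      intro b hb
      rw [Finset.mem_filter] at hb
      rw [Finset.mem_powerset]
      intro c hc
      rw [Finset.mem_image] at hc
      obtain ⟨p, hp, rfl⟩ := hc
      rw [blk, Finset.mem_filter] at hp
      exact mem_slab hs (hp.2.2.trans hb.2)
    have hcard : (Finset.Ico (J * s) (J * s + s)).powerset.card * k <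
        (B.filter (fun b => b.2 = J)).card := by
      rw [Finset.card_powerset, Nat.card_Ico]
      simpa [mul_comm] using hlt
    obtain ⟨T, _, hT⟩ := Finset.exists_lt_card_fiber_of_mul_lt_card_of_maps_to hmap hcard
    set F := (B.filter (fun b => b.2 = J)).filter (fun b => (blk X s b).image Prod.snd = T) with hF
    have hFm : ∀ b ∈ F, b ∈ B ∧ b.2 = J ∧ (blk X s b).image Prod.snd = T := by
      intro b hb
      rw [hF, Finset.mem_filter, Finset.mem_filter] at hb
      exact ⟨hb.1.1, hb.1.2, hb.2⟩
    have hFi : (F.image Prod.fst).card = F.card := by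
      apply Finset.card_image_of_injOn
      intro a ha b hb hab
      exact Prod.ext hab ((hFm a ha).2.1.trans (hFm b hb).2.1.symm)
    have hk1 : k ≤ (F.image Prod.fst).card := by omega
    have hk2 : k ≤ T.card := by
      obtain ⟨b, hb⟩ : F.Nonempty := Finset.card_pos.mp (by omega)
      have := hFm b hb
      rw [← this.2.2]
      exact (hB b this.1).2
    let e1 := Finset.orderEmbOfCardLe _ hk1
    let e2 := Finset.orderEmbOfCardLe _ hk2
    apply hav
    have key : ∀ i : ι, ∃ q : ℕ × ℕ, q ∈ X ∧ q.1 / s = e1 (x i) ∧ q.2 = e2 (y i) := by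
      intro i
      have m1 : e1 (x i) ∈ F.image Prod.fst := Finset.orderEmbOfCardLe_mem _ hk1 _
      have m2 : e2 (y i) ∈ T := Finset.orderEmbOfCardLe_mem _ hk2 _
      rw [Finset.mem_image] at m1
      obtain ⟨b, hb, hb1⟩ := m1
      rw [← (hFm b hb).2.2, Finset.mem_image] at m2
      obtain ⟨q, hq, hq2⟩ := m2
      rw [blk, Finset.mem_filter] at hq
      exact ⟨q, hq.1, hq.2.1.trans hb1, hq2⟩
    choose p hp using key
    refine ⟨p, fun i => (hp i).1, ?_, ?_⟩
    · intro i j hij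
      apply lt_of_div_lt (s := s)
      rw [(hp i).2.1, (hp j).2.1]
      exact e1.strictMono hij
    · intro i j hij
      rw [(hp i).2.2, (hp j).2.2]
      exact e2.strictMono hij
  refine h1.trans (Nat.mul_le_mul_left _ ?_)
  calc (B.image Prod.snd).card ≤ (Finset.range M).card := by
        apply Finset.card_le_card
        intro c hc
        rw [Finset.mem_image] at hc
        obtain ⟨b, hb, rfl⟩ := hc
        exact Finset.mem_range.mpr (hB b hb).1
    _ = M := Finset.card_range M

lemma patIn_swap {ι : Type} {k : ℕ} (x y : ι → Fin k) (X : Finset (ℕ × ℕ))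
    (h : PatIn y x (X.image Prod.swap)) : PatIn x y X := by
  obtain ⟨p, h1, h2, h3⟩ := h
  refine ⟨fun i => (p i).swap, ?_, fun i j h => h3 i j h, fun i j h => h2 i j h⟩
  intro i
  obtain ⟨q, hq, hq2⟩ := Finset.mem_image.mp (h1 i)
  show (p i).swap ∈ X
  rw [← hq2, Prod.swap_swap]
  exact hq

lemma tall_bound {ι : Type} {k s M : ℕ} (x y : ι → Fin k) (X : Finset (ℕ × ℕ)) (hs : 0 < s)
    (hav : ¬ PatIn x y X) (B : Finset (ℕ × ℕ))
    (hB : ∀ b ∈ B, b.1 < M ∧ k ≤ ((blk X s b).image Prod.fst).card) :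
    B.card ≤ k * 2 ^ s * M := by
  have := wide_bound (M := M) y x (X.image Prod.swap) hs (fun h => hav (patIn_swap x y X h))
    (B.image Prod.swap) (by
      intro b hb
      obtain ⟨c, hc, rfl⟩ := Finset.mem_image.mp hb
      refine ⟨(hB c hc).1, (hB c hc).2.trans ?_⟩
      apply Finset.card_le_card
      intro r hr
      obtain ⟨p, hp, rfl⟩ := Finset.mem_image.mp hr
      rw [blk, Finset.mem_filter] at hp
      refine Finset.mem_image.mpr ⟨p.swap, ?_, rfl⟩
      rw [blk, Finset.mem_filter]
      exact ⟨Finset.mem_image_of_mem _ hp.1, hp.2.2, hp.2.1⟩)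
  rwa [Finset.card_image_of_injective _ Prod.swap_injective] at this

lemma patIn_block {ι : Type} {k s : ℕ} (x y : ι → Fin k) (X : Finset (ℕ × ℕ))
    (h : PatIn x y (X.image fun p => (p.1 / s, p.2 / s))) : PatIn x y X := by
  obtain ⟨p, h1, h2, h3⟩ := h
  have : ∀ i, ∃ q ∈ X, (q.1 / s, q.2 / s) = p i := fun i => Finset.mem_image.mp (h1 i)
  choose q hq hqp using this
  refine ⟨q, hq, ?_, ?_⟩
  · intro i j hij
    have := h2 i j hij
    rw [← hqp i, ← hqp j] at this
    exact lt_of_div_lt this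
  · intro i j hij
    have := h3 i j hij
    rw [← hqp i, ← hqp j] at this
    exact lt_of_div_lt this

/-- Marcus–Tardos. -/
theorem marcus_tardos (k : ℕ) (hk : 2 ≤ k) : ∃ c : ℕ, ∀ (ι : Type) (x y : ι → Fin k) (m : ℕ)
    (X : Finset (ℕ × ℕ)), (∀ p ∈ X, p.1 < m ∧ p.2 < m) → ¬ PatIn x y X → X.card ≤ c * m := by
  obtain ⟨s, hs⟩ : ∃ s, s = k * k := ⟨_, rfl⟩
  obtain ⟨K, hK⟩ : ∃ K, K = 2 * (k * 2 ^ s * (s * s)) := ⟨_, rfl⟩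
  refine ⟨2 * K + s * s, ?_⟩
  intro ι x y m
  induction m using Nat.strong_induction_on with
  | _ m ih =>
  intro X hX hav
  have hs4 : 4 ≤ s := by rw [hs]; nlinarith
  by_cases hm : m ≤ s * s
  · have : X.card ≤ m * m := by
      calc X.card ≤ (Finset.range m ×ˢ Finset.range m).card := by
            apply Finset.card_le_card
            intro p hp
            simpa using hX p hp
        _ = m * m := by simp
    nlinarith
  push Not at hm
  set M := m / s + 1 with hM
  have hMs : M * s ≤ m + s := by
    have := Nat.div_mul_le_self m s
    rw [hM]; nlinarith
  have hMm : M < m := by nlinarith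
  set B := X.image fun p => (p.1 / s, p.2 / s) with hBdef
  have hBM : ∀ b ∈ B, b.1 < M ∧ b.2 < M := by
    intro b hb
    obtain ⟨p, hp, rfl⟩ := Finset.mem_image.mp hb
    have := hX p hp
    exact ⟨Nat.lt_succ_of_le (Nat.div_le_div_right this.1.le),
      Nat.lt_succ_of_le (Nat.div_le_div_right this.2.le)⟩
  have hBc := ih M hMm B hBM (fun h => hav (patIn_block x y X h))
  have hW := wide_bound (M := M) x y X (by omega : 0 < s) hav
    (B.filter fun b => k ≤ ((blk X s b).image Prod.snd).card) (by
      intro b hb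
      rw [Finset.mem_filter] at hb
      exact ⟨(hBM b hb.1).2, hb.2⟩)
  have hT := tall_bound (M := M) x y X (by omega : 0 < s) hav
    (B.filter fun b => k ≤ ((blk X s b).image Prod.fst).card) (by
      intro b hb
      rw [Finset.mem_filter] at hb
      exact ⟨(hBM b hb.1).1, hb.2⟩)
  have hsum : X.card = ∑ b ∈ B, (blk X s b).card := by
    rw [Finset.card_eq_sum_card_image (fun p : ℕ × ℕ => (p.1 / s, p.2 / s)) X]
    apply Finset.sum_congr rfl
    intro b _
    congr 1
    ext p
    simp [blk, Prod.ext_iff]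
  have hle : ∀ b ∈ B, (blk X s b).card ≤ (k - 1) * (k - 1)
      + (if k ≤ ((blk X s b).image Prod.snd).card then s * s else 0)
      + (if k ≤ ((blk X s b).image Prod.fst).card then s * s else 0) := by
    intro b _
    have hss : (blk X s b).card ≤ s * s := by
      calc (blk X s b).card ≤ (Finset.Ico (b.1 * s) (b.1 * s + s) ×ˢ
            Finset.Ico (b.2 * s) (b.2 * s + s)).card := by
            apply Finset.card_le_card
            intro p hp
            rw [blk, Finset.mem_filter] at hp
            rw [Finset.mem_product]
            exact ⟨mem_slab (by omega) hp.2.1, mem_slab (by omega) hp.2.2⟩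
        _ = s * s := by simp
    split_ifs with h1 h2 h2
    · omega
    · omega
    · omega
    · calc (blk X s b).card ≤ (((blk X s b).image Prod.fst) ×ˢ ((blk X s b).image Prod.snd)).card := by
            apply Finset.card_le_card
            intro p hp
            rw [Finset.mem_product]
            exact ⟨Finset.mem_image_of_mem _ hp, Finset.mem_image_of_mem _ hp⟩
        _ ≤ (k - 1) * (k - 1) + 0 + 0 := by
            rw [Finset.card_product]
            apply Nat.mul_le_mul <;> omega
  have htot := Finset.sum_le_sum hle
  rw [← hsum, Finset.sum_add_distrib, Finset.sum_add_distrib, ← Finset.sum_filter,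
    ← Finset.sum_filter, Finset.sum_const, Finset.sum_const, Finset.sum_const] at htot
  simp only [smul_eq_mul] at htot
  obtain ⟨j, rfl⟩ : ∃ j, k = j + 1 := ⟨k - 1, by omega⟩
  simp only [Nat.add_sub_cancel] at htot
  set c := 2 * K + s * s with hc
  have hfin : X.card ≤ M * (c * (j * j) + K) := by
    have e1 := Nat.mul_le_mul_right (s * s) hW
    have e2 := Nat.mul_le_mul_right (s * s) hT
    have e3 := Nat.mul_le_mul_right (j * j) hBc
    have e4 : M * (c * (j * j) + K) = c * M * (j * j) + ((j + 1) * 2 ^ s * M * (s * s))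
      + ((j + 1) * 2 ^ s * M * (s * s)) := by rw [hK]; ring
    omega
  have hj : 1 ≤ j := by omega
  have hfin2 : X.card * s ≤ (c * m) * s := by
    calc X.card * s ≤ (M * (c * (j * j) + K)) * s := Nat.mul_le_mul_right _ hfin
      _ = (M * s) * (c * (j * j) + K) := by ring
      _ ≤ (m + s) * (c * (j * j) + K) := Nat.mul_le_mul_right _ hMs
      _ = c * m * (j * j) + K * m + c * ((j * j) * s) + K * s := by ring
      _ ≤ c * m * (j * j) + K * m + c * m + K * m := by
          have a1 : (j * j) * s ≤ m := by
            have : j * j ≤ s := by rw [hs]; nlinarith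
            nlinarith
          have a2 : s ≤ m := by nlinarith
          gcongr
      _ ≤ c * m * (j * j) + c * m + c * m := by
          have : K * m + K * m ≤ c * m := by rw [hc]; nlinarith
          omega
      _ ≤ (c * m) * s := by
          have : j * j + 2 ≤ s := by rw [hs]; nlinarith
          calc _ = (c * m) * (j * j + 2) := by ring
            _ ≤ _ := Nat.mul_le_mul_left _ this
  exact Nat.le_of_mul_le_mul_right hfin2 (by omega)

def GoodP {V : Type} [Fintype V] [DecidableEq V] (G : SimpleGraph V) (d : ℕ)
    (P : Finpartition (univ : Finset V)) : Prop :=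
  ∀ A ∈ P.parts, redDegree G P A ≤ d

def StepP {V : Type} [Fintype V] [DecidableEq V] (G : SimpleGraph V) (d : ℕ)
    (P Q : Finpartition (univ : Finset V)) : Prop := IsMerge P Q ∧ GoodP G d Q

lemma twinWidthLE_of_steps {V : Type} [Fintype V] [DecidableEq V] (G : SimpleGraph V) (d : ℕ)
    (P Q : Finpartition (univ : Finset V)) (hP : ∀ A ∈ P.parts, A.card = 1) (hg : GoodP G d P)
    (hQ : Q.parts.card ≤ 1) (h : Relation.ReflTransGen (StepP G d) P Q) : TwinWidthLE G d := by
  have key : ∀ P, Relation.ReflTransGen (StepP G d) P Q → GoodP G d P →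
      ∃ L : List (Finpartition (univ : Finset V)), L.head? = some P ∧ L.getLast? = some Q ∧
        List.IsChain IsMerge L ∧ ∀ P ∈ L, GoodP G d P := by
    intro P h
    induction h using Relation.ReflTransGen.head_induction_on with
    | refl => 
      intro hg
      exact ⟨[Q], rfl, rfl, by simp, by simpa using hg⟩
    | head h1 h2 ih =>
      rename_i P R
      intro hg
      obtain ⟨L, e1, e2, e3, e4⟩ := ih h1.2
      cases L with
      | nil => simp at e1
      | cons S L =>
        simp at e1
        subst e1
        refine ⟨P :: S :: L, rfl, by simpa using e2, ?_, ?_⟩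
        · exact List.isChain_cons_cons.mpr ⟨h1.1, e3⟩
        · intro T hT
          rcases List.mem_cons.mp hT with rfl | hT
          · exact hg
          · exact e4 T hT
  obtain ⟨L, e1, e2, e3, e4⟩ := key P h hg
  exact ⟨L, ⟨P, e1, hP⟩, ⟨Q, e2, hQ⟩, e3, e4⟩

lemma exists_merge {V : Type} [Fintype V] [DecidableEq V] (P : Finpartition (univ : Finset V))
    (A B : Finset V) (hA : A ∈ P.parts) (hB : B ∈ P.parts) :
    ∃ R : Finpartition (univ : Finset V),
      R.parts = insert (A ∪ B) ((P.parts.erase A).erase B) := by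
  refine ⟨Finpartition.ofExistsUnique (insert (A ∪ B) ((P.parts.erase A).erase B))
    (fun _ _ => Finset.subset_univ _) ?_ ?_, rfl⟩
  · intro v _
    obtain ⟨t, ht, hvt⟩ := P.exists_mem (Finset.mem_univ v)
    by_cases hv : v ∈ A ∪ B
    · refine ⟨A ∪ B, ⟨Finset.mem_insert_self _ _, hv⟩, ?_⟩
      rintro T ⟨hT, hvT⟩
      rcases Finset.mem_insert.mp hT with rfl | hT
      · rfl
      exfalso
      rw [Finset.mem_erase, Finset.mem_erase] at hT
      rcases Finset.mem_union.mp hv with h | h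
      · exact hT.2.1 (P.eq_of_mem_parts hT.2.2 hA hvT h)
      · exact hT.1 (P.eq_of_mem_parts hT.2.2 hB hvT h)
    · rw [Finset.mem_union, not_or] at hv
      refine ⟨t, ⟨?_, hvt⟩, ?_⟩
      · apply Finset.mem_insert_of_mem
        rw [Finset.mem_erase, Finset.mem_erase]
        refine ⟨?_, ?_, ht⟩
        · rintro rfl; exact hv.2 hvt
        · rintro rfl; exact hv.1 hvt
      · rintro T ⟨hT, hvT⟩
        rcases Finset.mem_insert.mp hT with rfl | hT
        · exfalso
          rcases Finset.mem_union.mp hvT with h | h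
          · exact hv.1 h
          · exact hv.2 h
        rw [Finset.mem_erase, Finset.mem_erase] at hT
        exact P.eq_of_mem_parts hT.2.2 ht hvT hvt
  · intro h
    rcases Finset.mem_insert.mp h with h | h
    · have := P.nonempty_of_mem_parts hA
      obtain ⟨a, ha⟩ := this
      have : a ∈ A ∪ B := Finset.mem_union_left _ ha
      rw [← h] at this
      simp at this
    · exact P.empty_notMem_parts (Finset.mem_of_mem_erase (Finset.mem_of_mem_erase h))

lemma steps_of_between {V : Type} [Fintype V] [DecidableEq V] (G : SimpleGraph V) (d : ℕ)
    (Q : Finpartition (univ : Finset V)) : ∀ (n : ℕ) (P : Finpartition (univ : Finset V)),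
    P.parts.card = n → P ≤ Q → (∀ R, P ≤ R → R ≤ Q → GoodP G d R) →
    Relation.ReflTransGen (StepP G d) P Q := by
  intro n
  induction n with
  | zero =>
    intro P hn hPQ _
    have h0 : P.parts = ∅ := Finset.card_eq_zero.mp hn
    have h1 : Q.parts = ∅ := by
      have := Finpartition.card_mono hPQ
      rw [hn] at this
      exact Finset.card_eq_zero.mp (by omega)
    have : P = Q := Finpartition.ext (by rw [h0, h1])
    rw [this]
  | succ n ih =>
    intro P hn hPQ hg
    by_cases hne : ∃ A ∈ P.parts, ∃ B ∈ P.parts, A ≠ B ∧ ∃ C ∈ Q.parts, A ⊆ C ∧ B ⊆ C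
    · obtain ⟨A, hA, B, hB, hAB, C, hC, hAC, hBC⟩ := hne
      obtain ⟨R, hR⟩ := exists_merge P A B hA hB
      have hPR : P ≤ R := by
        intro T hT
        by_cases h1 : T = A
        · exact ⟨A ∪ B, by rw [hR]; exact Finset.mem_insert_self _ _, by
            rw [h1]; exact Finset.subset_union_left⟩
        by_cases h2 : T = B
        · exact ⟨A ∪ B, by rw [hR]; exact Finset.mem_insert_self _ _, by
            rw [h2]; exact Finset.subset_union_right⟩
        exact ⟨T, by rw [hR]; simp [h1, h2, hT], le_refl _⟩
      have hRQ : R ≤ Q := by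
        intro T hT
        rw [hR] at hT
        rcases Finset.mem_insert.mp hT with rfl | hT
        · exact ⟨C, hC, Finset.union_subset hAC hBC⟩
        · exact hPQ (Finset.mem_of_mem_erase (Finset.mem_of_mem_erase hT))
      have hcard : R.parts.card = n := by
        rw [hR, Finset.card_insert_of_notMem, Finset.card_erase_of_mem, Finset.card_erase_of_mem hA]
        · have : 2 ≤ P.parts.card := Finset.one_lt_card.mpr ⟨A, hA, B, hB, hAB⟩
          omega
        · exact Finset.mem_erase.mpr ⟨hAB.symm, hB⟩
        · intro h
          rw [Finset.mem_erase, Finset.mem_erase] at h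
          obtain ⟨a, ha⟩ := P.nonempty_of_mem_parts hA
          exact h.2.1 (P.eq_of_mem_parts h.2.2 hA (Finset.mem_union_left _ ha) ha)
      refine Relation.ReflTransGen.head ⟨⟨A, hA, B, hB, hAB, hR⟩, hg R hPR hRQ⟩
        (ih R hcard hRQ fun S h1 h2 => hg S (hPR.trans h1) h2)
    · have : P = Q := by
        apply le_antisymm hPQ
        intro C hC
        obtain ⟨u, hu⟩ := Q.nonempty_of_mem_parts hC
        obtain ⟨A, hA, huA⟩ := P.exists_mem (Finset.mem_univ u)
        refine ⟨A, hA, ?_⟩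
        have sub : ∀ (v : V) (B : Finset V), v ∈ C → B ∈ P.parts → v ∈ B → B ⊆ C := by
          intro v B hv hB hvB
          obtain ⟨C', hC', h⟩ := hPQ hB
          rwa [Q.eq_of_mem_parts hC hC' hv (h hvB)]
        intro v hv
        obtain ⟨B, hB, hvB⟩ := P.exists_mem (Finset.mem_univ v)
        have : A = B := by
          by_contra hAB
          exact hne ⟨A, hA, B, hB, hAB, C, hC, sub u A hu hA huA, sub v B hv hB hvB⟩
        rwa [this]
      rw [this]

open Classical in
noncomputable def colP {V κ : Type} [Fintype V] [DecidableEq V] (c : V → κ) :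
    Finpartition (univ : Finset V) := Finpartition.ofSetoid (Setoid.ker c)

lemma colP_same {V κ : Type} [Fintype V] [DecidableEq V] (c : V → κ) (A : Finset V)
    (hA : A ∈ (colP c).parts) (u v : V) (hu : u ∈ A) : v ∈ A ↔ c u = c v := by
  classical
  have h : (colP c).part u = A := Finpartition.part_eq_of_mem _ hA hu
  rw [← h]
  unfold colP
  rw [Finpartition.mem_part_ofSetoid_iff_rel]
  rfl

lemma colP_le {V κ κ' : Type} [Fintype V] [DecidableEq V] (c : V → κ) (g : κ → κ') :
    colP c ≤ colP (g ∘ c) := by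
  intro A hA
  obtain ⟨u, hu⟩ := (colP c).nonempty_of_mem_parts hA
  obtain ⟨B, hB, huB⟩ := (colP (g ∘ c)).exists_mem (Finset.mem_univ u)
  refine ⟨B, hB, ?_⟩
  intro v hv
  rw [colP_same _ B hB u v huB]
  show g (c u) = g (c v)
  rw [(colP_same c A hA u v hu).mp hv]

open Classical in
lemma redDegree_eq {V : Type} [Fintype V] [DecidableEq V] (G : SimpleGraph V)
    (P : Finpartition (univ : Finset V)) (A : Finset V) :
    redDegree G P A = ((P.parts.erase A).filter fun B => ¬ IsHomog G A B).card := by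
  unfold redDegree
  congr

/-- bounding red degree of intermediate partitions -/
lemma good_between {V κ κ' : Type} [Fintype V] [DecidableEq V] [DecidableEq κ] (G : SimpleGraph V)
    (d : ℕ) (c : V → κ) (c' : V → κ')
    (Sh : κ' → κ' → Prop)
    (hhom : ∀ u u' v v', c' u = c' u' → c' v = c' v' → ¬ Sh (c' u) (c' v) →
      (G.Adj u v ↔ G.Adj u' v'))
    (hcnt : ∀ u, ∃ T : Finset κ, T.card ≤ d ∧ ∀ v, Sh (c' u) (c' v) → c v ∈ T)
    (R : Finpartition (univ : Finset V)) (h1 : colP c ≤ R) (h2 : R ≤ colP c') : GoodP G d R := by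
  classical
  intro A hA
  obtain ⟨u, hu⟩ := R.nonempty_of_mem_parts hA
  obtain ⟨T, hT, hTu⟩ := hcnt u
  have hsame : ∀ B ∈ R.parts, ∀ v ∈ B, ∀ w ∈ B, c' v = c' w := by
    intro B hB v hv w hw
    obtain ⟨C, hC, hBC⟩ := h2 hB
    exact (colP_same c' C hC v w (hBC hv)).mp (hBC hw)
  rw [redDegree_eq]
  refine le_trans ?_ hT
  let pick : Finset V → V := fun B => if h : B.Nonempty then h.choose else u
  have hpick : ∀ B ∈ R.parts, pick B ∈ B := by
    intro B hB
    have h := R.nonempty_of_mem_parts hB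
    simp only [pick, h, dif_pos]
    exact h.choose_spec
  apply Finset.card_le_card_of_injOn (fun B => c (pick B))
  · intro B hB
    rw [Finset.mem_coe, Finset.mem_filter, Finset.mem_erase] at hB
    apply hTu
    by_contra hsh
    apply hB.2
    have hiff : ∀ a ∈ A, ∀ b ∈ B, G.Adj u (pick B) ↔ G.Adj a b := fun a ha b hb =>
      hhom u a (pick B) b (hsame A hA u hu a ha)
        (hsame B hB.1.2 _ (hpick B hB.1.2) b hb) hsh
    by_cases hadj : G.Adj u (pick B)
    · left
      intro a ha b hb
      exact (hiff a ha b hb).mp hadj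
    · right
      intro a ha b hb h
      exact hadj ((hiff a ha b hb).mpr h)
  · intro B hB B' hB' heq
    rw [Finset.mem_coe, Finset.mem_filter, Finset.mem_erase] at hB hB'
    have heq : c (pick B) = c (pick B') := heq
    obtain ⟨D, hD, hBD⟩ := (colP c).exists_mem (Finset.mem_univ (pick B))
    have h' := (colP_same c D hD _ (pick B') hBD).mpr heq
    obtain ⟨E, hE, hDE⟩ := h1 hD
    have e1 := R.eq_of_mem_parts hB.1.2 hE (hpick B hB.1.2) (hDE hBD)
    have e2 := R.eq_of_mem_parts hB'.1.2 hE (hpick B' hB'.1.2) (hDE h')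
    rw [e1, e2]

def colF {V : Type} (l r : V → ℚ) (f : ℚ → ℕ) (v : V) : ℕ × ℕ := (f (l v), f (r v))

def mg (a x : ℕ) : ℕ := if x ≤ a then x else x - 1

lemma mg_mono (a : ℕ) : Monotone (mg a) := by
  intro x y h
  unfold mg
  split_ifs <;> omega

def degX (X : Finset (ℕ × ℕ)) (i : ℕ) : ℕ := (X.filter fun p => p.1 = i ∨ p.2 = i).card

lemma degX_mg_ne (X : Finset (ℕ × ℕ)) (a i : ℕ) (h : i ≠ a) :
    ∃ j, degX (X.image (Prod.map (mg a) (mg a))) i ≤ degX X j := by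
  refine ⟨if i < a then i else i + 1, ?_⟩
  unfold degX
  refine le_trans (Finset.card_le_card (t := (X.filter fun p =>
    p.1 = (if i < a then i else i + 1) ∨ p.2 = (if i < a then i else i + 1)).image
      (Prod.map (mg a) (mg a))) ?_) Finset.card_image_le
  intro q hq
  rw [Finset.mem_filter, Finset.mem_image] at hq
  obtain ⟨⟨p, hp, rfl⟩, hq⟩ := hq
  refine Finset.mem_image_of_mem _ ?_
  rw [Finset.mem_filter]
  refine ⟨hp, ?_⟩
  simp only [Prod.map, mg] at hq
  split_ifs at hq ⊢ <;> omega

lemma degX_mg_eq (X : Finset (ℕ × ℕ)) (a : ℕ) :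
    degX (X.image (Prod.map (mg a) (mg a))) a ≤ degX X a + degX X (a + 1) := by
  unfold degX
  refine le_trans (Finset.card_le_card (t := ((X.filter fun p => p.1 = a ∨ p.2 = a) ∪
    (X.filter fun p => p.1 = a + 1 ∨ p.2 = a + 1)).image
      (Prod.map (mg a) (mg a))) ?_) (Finset.card_image_le.trans (Finset.card_union_le _ _))
  intro q hq
  rw [Finset.mem_filter, Finset.mem_image] at hq
  obtain ⟨⟨p, hp, rfl⟩, hq⟩ := hq
  refine Finset.mem_image_of_mem _ ?_
  rw [Finset.mem_union, Finset.mem_filter, Finset.mem_filter]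
  simp only [Prod.map, mg] at hq
  simp only [hp, true_and]
  split_ifs at hq <;> omega

lemma sum_degX (X : Finset (ℕ × ℕ)) (S : Finset ℕ) : ∑ i ∈ S, degX X i ≤ 2 * X.card := by
  have h1 : ∀ i ∈ S, degX X i ≤ (X.filter fun p => p.1 = i).card + (X.filter fun p => p.2 = i).card := by
    intro i _
    unfold degX
    rw [Finset.filter_or]
    exact Finset.card_union_le _ _
  refine (Finset.sum_le_sum h1).trans ?_
  rw [Finset.sum_add_distrib]
  have h2 : ∀ g : ℕ × ℕ → ℕ, ∑ i ∈ S, (X.filter fun p => g p = i).card ≤ X.card := by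
    intro g
    rw [← Finset.card_biUnion]
    · apply Finset.card_le_card
      intro p hp
      rw [Finset.mem_biUnion] at hp
      obtain ⟨i, _, h⟩ := hp
      exact (Finset.mem_filter.mp h).1
    · intro i _ j _ hij
      rw [Function.onFun, Finset.disjoint_left]
      intro p hp hp'
      exact hij ((Finset.mem_filter.mp hp).2.symm.trans (Finset.mem_filter.mp hp').2)
  have := h2 Prod.fst
  have := h2 Prod.snd
  omega

lemma exists_mergeable (X : Finset (ℕ × ℕ)) (c m : ℕ) (hX : X.card ≤ c * (m + 2)) :
    ∃ a, a + 1 < m + 2 ∧ degX (X.image (Prod.map (mg a) (mg a))) a ≤ 8 * c + 1 := by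
  by_contra hcon
  push Not at hcon
  have h1 : ∀ a ∈ Finset.range (m + 1), 8 * c + 2 ≤ degX X a + degX X (a + 1) := by
    intro a ha
    have := hcon a (by simpa using ha)
    have := degX_mg_eq X a
    omega
  have h2 := Finset.sum_le_sum h1
  rw [Finset.sum_const, Finset.card_range, Finset.sum_add_distrib, smul_eq_mul] at h2
  have h3 := sum_degX X (Finset.range (m + 1))
  have h4 : ∑ a ∈ Finset.range (m + 1), degX X (a + 1) ≤ 2 * X.card := by
    have := sum_degX X (Finset.range (m + 2))
    rw [Finset.sum_range_succ'] at this
    omega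
  nlinarith

lemma lt_iff_of_mono {f : ℚ → ℕ} (hf : Monotone f) {x y : ℚ} (h : f x ≠ f y) :
    x < y ↔ f x < f y := by
  constructor
  · intro hxy
    exact lt_of_le_of_ne (hf hxy.le) h
  · intro hxy
    by_contra hc
    exact absurd (hf (not_lt.mp hc)) (not_le.mpr hxy)

def ShareP (p q : ℕ × ℕ) : Prop := p.1 = q.1 ∨ p.1 = q.2 ∨ p.2 = q.1 ∨ p.2 = q.2

lemma circ_hom {V : Type} (G : SimpleGraph V) (l r : V → ℚ)
    (hadj : ∀ u v : V, u ≠ v →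
      (G.Adj u v ↔ (l u < l v ∧ l v < r u ∧ r u < r v) ∨ (l v < l u ∧ l u < r v ∧ r v < r u)))
    (f : ℚ → ℕ) (hf : Monotone f) (u u' v v' : V) (h1 : colF l r f u = colF l r f u')
    (h2 : colF l r f v = colF l r f v') (hs : ¬ ShareP (colF l r f u) (colF l r f v)) :
    G.Adj u v ↔ G.Adj u' v' := by
  have main : ∀ u v, ¬ ShareP (colF l r f u) (colF l r f v) → (G.Adj u v ↔
      (f (l u) < f (l v) ∧ f (l v) < f (r u) ∧ f (r u) < f (r v)) ∨
      (f (l v) < f (l u) ∧ f (l u) < f (r v) ∧ f (r v) < f (r u))) := by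
    intro u v hs
    have hne : u ≠ v := by
      rintro rfl
      exact hs (Or.inl rfl)
    simp only [ShareP, colF, not_or] at hs
    obtain ⟨a, b, c, d⟩ := hs
    rw [hadj u v hne, lt_iff_of_mono hf a, lt_iff_of_mono hf (Ne.symm c), lt_iff_of_mono hf d,
      lt_iff_of_mono hf (Ne.symm a), lt_iff_of_mono hf b, lt_iff_of_mono hf (Ne.symm d)]
  have hs' : ¬ ShareP (colF l r f u') (colF l r f v') := by rwa [← h1, ← h2]
  rw [main u v hs, main u' v' hs']
  simp only [colF, Prod.mk.injEq] at h1 h2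
  rw [h1.1, h1.2, h2.1, h2.2]

lemma cnt_aux (X : Finset (ℕ × ℕ)) (d a i : ℕ) (hd : ∀ i, degX X i ≤ d) :
    (X.filter fun p => mg a p.1 = i ∨ mg a p.2 = i).card ≤ 2 * d := by
  refine le_trans (Finset.card_le_card (t := (X.filter fun p => p.1 = i ∨ p.2 = i) ∪
    (X.filter fun p => p.1 = i + 1 ∨ p.2 = i + 1)) ?_) ((Finset.card_union_le _ _).trans ?_)
  · intro p hp
    rw [Finset.mem_filter] at hp
    rw [Finset.mem_union, Finset.mem_filter, Finset.mem_filter]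
    obtain ⟨hp, hq⟩ := hp
    simp only [mg] at hq
    simp only [hp, true_and]
    split_ifs at hq <;> omega
  · have h1 := hd i
    have h2 := hd (i + 1)
    unfold degX at h1 h2
    omega

lemma circ_steps {V : Type} [Fintype V] [DecidableEq V] (G : SimpleGraph V) (l r : V → ℚ)
    (hadj : ∀ u v : V, u ≠ v →
      (G.Adj u v ↔ (l u < l v ∧ l v < r u ∧ r u < r v) ∨ (l v < l u ∧ l u < r v ∧ r v < r u)))
    (c : ℕ) (hc : ∀ (f : ℚ → ℕ) (m : ℕ), Monotone f → (∀ v, f (l v) < m ∧ f (r v) < m) →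
      (univ.image (colF l r f)).card ≤ c * m) :
    ∀ (m : ℕ) (f : ℚ → ℕ), Monotone f → (∀ v, f (l v) < m ∧ f (r v) < m) →
      (∀ i, degX (univ.image (colF l r f)) i ≤ 8 * c + 1) →
      ∃ Q : Finpartition (univ : Finset V), Q.parts.card ≤ 1 ∧
        Relation.ReflTransGen (StepP G (4 * (8 * c + 1))) (colP (colF l r f)) Q := by
  have small : ∀ f : ℚ → ℕ, (∀ v, f (l v) < 1 ∧ f (r v) < 1) →
      (colP (colF l r f)).parts.card ≤ 1 := by
    intro f hf
    rw [Finset.card_le_one]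
    intro A hA B hB
    obtain ⟨u, hu⟩ := (colP (colF l r f)).nonempty_of_mem_parts hA
    obtain ⟨v, hv⟩ := (colP (colF l r f)).nonempty_of_mem_parts hB
    have : v ∈ A := by
      rw [colP_same _ A hA u v hu]
      have := hf u
      have := hf v
      simp only [colF, Prod.mk.injEq]
      omega
    exact (colP (colF l r f)).eq_of_mem_parts hA hB this hv
  intro m
  induction m with
  | zero =>
    intro f _ hfm _
    refine ⟨_, small f ?_, Relation.ReflTransGen.refl⟩
    intro v
    have := hfm v
    omega
  | succ m ih =>
    cases m with
    | zero =>
      intro f _ hfm _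
      exact ⟨_, small f hfm, Relation.ReflTransGen.refl⟩
    | succ m =>
      intro f hf hfm hd
      obtain ⟨a, ha, hda⟩ := exists_mergeable _ c m (hc f (m + 2) hf hfm)
      set X := univ.image (colF l r f) with hX
      have hcomp : colF l r (mg a ∘ f) = Prod.map (mg a) (mg a) ∘ colF l r f := rfl
      have hX' : univ.image (colF l r (mg a ∘ f)) = X.image (Prod.map (mg a) (mg a)) := by
        rw [hX, Finset.image_image, hcomp]
      have hf' : Monotone (mg a ∘ f) := (mg_mono a).comp hf
      obtain ⟨Q, hQ1, hQ2⟩ := ih (mg a ∘ f) hf' (by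
          intro v
          have := hfm v
          simp only [Function.comp, mg]
          constructor <;> split_ifs <;> omega) (by
          intro i
          rw [hX']
          by_cases hi : i = a
          · rw [hi]; exact hda
          · obtain ⟨j, hj⟩ := degX_mg_ne X a i hi
            exact hj.trans (hd j))
      refine ⟨Q, hQ1, Relation.ReflTransGen.trans ?_ hQ2⟩
      refine steps_of_between G _ _ _ _ rfl (by rw [hcomp]; exact colP_le _ _) ?_
      intro R h1 h2
      refine good_between G _ (colF l r f) (colF l r (mg a ∘ f)) ShareP
        (fun u u' v v' e1 e2 e3 => circ_hom G l r hadj _ hf' u u' v v' e1 e2 e3) ?_ R h1 h2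
      intro u
      refine ⟨(X.filter fun p => mg a p.1 = mg a (f (l u)) ∨ mg a p.2 = mg a (f (l u))) ∪
        (X.filter fun p => mg a p.1 = mg a (f (r u)) ∨ mg a p.2 = mg a (f (r u))), ?_, ?_⟩
      · refine (Finset.card_union_le _ _).trans ?_
        have := cnt_aux X _ a (mg a (f (l u))) hd
        have := cnt_aux X _ a (mg a (f (r u))) hd
        omega
      · intro v hv
        have hm : colF l r f v ∈ X := Finset.mem_image_of_mem _ (Finset.mem_univ v)
        rw [Finset.mem_union, Finset.mem_filter, Finset.mem_filter]
        simp only [ShareP, colF, Function.comp] at hv hm ⊢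
        simp only [hm, true_and]
        omega

lemma circ_tww {n : ℕ} (G : SimpleGraph (Fin n)) (l r : Fin n → ℚ)
    (hinj : Function.Injective (fun p : Fin n × Bool => if p.2 then r p.1 else l p.1))
    (hadj : ∀ u v : Fin n, u ≠ v →
      (G.Adj u v ↔ (l u < l v ∧ l v < r u ∧ r u < r v) ∨ (l v < l u ∧ l u < r v ∧ r v < r u)))
    (c : ℕ) (hc : ∀ (f : ℚ → ℕ) (m : ℕ), Monotone f → (∀ v, f (l v) < m ∧ f (r v) < m) →
      (univ.image (colF l r f)).card ≤ c * m) : TwinWidthLE G (4 * (8 * c + 1)) := by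
  let E : Finset ℚ := univ.image l ∪ univ.image r
  let f : ℚ → ℕ := fun x => (E.filter (· < x)).card
  have hl : ∀ v, l v ∈ E := fun v => Finset.mem_union_left _ (Finset.mem_image_of_mem _ (Finset.mem_univ v))
  have hr : ∀ v, r v ∈ E := fun v => Finset.mem_union_right _ (Finset.mem_image_of_mem _ (Finset.mem_univ v))
  have hf : Monotone f := by
    intro x y h
    apply Finset.card_le_card
    intro z hz
    rw [Finset.mem_filter] at hz ⊢
    exact ⟨hz.1, lt_of_lt_of_le hz.2 h⟩
  have hstr : ∀ x ∈ E, ∀ y, x < y → f x < f y := by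
    intro x hx y hxy
    apply Finset.card_lt_card
    rw [Finset.ssubset_iff_of_subset]
    · exact ⟨x, by rw [Finset.mem_filter]; exact ⟨hx, hxy⟩, by simp⟩
    · intro z hz
      rw [Finset.mem_filter] at hz ⊢
      exact ⟨hz.1, hz.2.trans hxy⟩
  have hfi : ∀ x ∈ E, ∀ y ∈ E, f x = f y → x = y := by
    intro x hx y hy h
    rcases lt_trichotomy x y with h1 | h1 | h1
    · have := hstr x hx y h1; omega
    · exact h1
    · have := hstr y hy x h1; omega
  have hfm : ∀ x ∈ E, f x < E.card := by
    intro x hx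
    apply Finset.card_lt_card
    rw [Finset.ssubset_iff_of_subset (Finset.filter_subset _ _)]
    exact ⟨x, hx, by simp⟩
  have hll : ∀ u v, l u = l v → u = v := by
    intro u v h
    have := @hinj (u, false) (v, false) (by simpa using h)
    exact congrArg Prod.fst this
  have hrr : ∀ u v, r u = r v → u = v := by
    intro u v h
    have := @hinj (u, true) (v, true) (by simpa using h)
    exact congrArg Prod.fst this
  have hlr' : ∀ u v, l u ≠ r v := by
    intro u v h
    have := @hinj (u, false) (v, true) (by simpa using h)
    exact absurd (congrArg Prod.snd this) (by simp)
  obtain ⟨Q, hQ, hsteps⟩ := circ_steps G l r hadj c hc E.card f hf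
    (fun v => ⟨hfm _ (hl v), hfm _ (hr v)⟩) (by
      intro i
      refine le_trans ?_ (Nat.le_add_left 1 _)
      unfold degX
      rw [Finset.card_le_one]
      intro p hp q hq
      rw [Finset.mem_filter, Finset.mem_image] at hp hq
      obtain ⟨⟨u, _, rfl⟩, hp⟩ := hp
      obtain ⟨⟨v, _, rfl⟩, hq⟩ := hq
      have : u = v := by
        simp only [colF] at hp hq
        rcases hp with hp | hp <;> rcases hq with hq | hq
        · exact hll _ _ (hfi _ (hl u) _ (hl v) (hp.trans hq.symm))
        · exact absurd (hfi _ (hl u) _ (hr v) (hp.trans hq.symm)) (hlr' _ _)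
        · exact absurd (hfi _ (hl v) _ (hr u) (hq.trans hp.symm)) (hlr' _ _)
        · exact hrr _ _ (hfi _ (hr u) _ (hr v) (hp.trans hq.symm))
      rw [this])
  have hsing : ∀ A ∈ (colP (colF l r f)).parts, A.card = 1 := by
    intro A hA
    obtain ⟨u, hu⟩ := (colP (colF l r f)).nonempty_of_mem_parts hA
    rw [Finset.card_eq_one]
    refine ⟨u, ?_⟩
    ext v
    rw [colP_same _ A hA u v hu, Finset.mem_singleton]
    constructor
    · intro h
      simp only [colF, Prod.mk.injEq] at h
      exact (hll _ _ (hfi _ (hl u) _ (hl v) h.1)).symm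
    · rintro rfl; rfl
  refine twinWidthLE_of_steps G _ _ Q hsing ?_ hQ hsteps
  intro A hA
  classical
  rw [redDegree_eq]
  rw [Finset.filter_false_of_mem]
  · simp
  · intro B hB
    rw [not_not]
    obtain ⟨a, rfl⟩ := Finset.card_eq_one.mp (hsing A hA)
    obtain ⟨b, rfl⟩ := Finset.card_eq_one.mp (hsing B (Finset.mem_of_mem_erase hB))
    by_cases h : G.Adj a b
    · left; simpa using h
    · right; simpa using h

lemma not_tww {V : Type} [Fintype V] [DecidableEq V] (G : SimpleGraph V) (t k : ℕ) (u₀ v₀ : V)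
    (h0 : u₀ ≠ v₀)
    (h : ∀ u v : V, u ≠ v → ∃ (S : Finset (Fin k)) (w : Fin k → V), t < S.card ∧
      Function.Injective w ∧
      ∀ a ∈ S, w a ≠ u ∧ w a ≠ v ∧ ¬ (G.Adj u (w a) ↔ G.Adj v (w a))) :
    ¬ TwinWidthLE G t := by
  classical
  rintro ⟨L, ⟨P0, hP0, hs⟩, ⟨PL, hPL, hc⟩, hch, hgood⟩
  have hsing : ∀ v, {v} ∈ P0.parts := by
    intro v
    obtain ⟨A, hA, hv⟩ := P0.exists_mem (Finset.mem_univ v)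
    obtain ⟨a, rfl⟩ := Finset.card_eq_one.mp (hs A hA)
    rw [Finset.mem_singleton] at hv
    rwa [hv]
  match L, hP0, hPL, hch, hgood with
  | [], hP0, _, _, _ => simp at hP0
  | [P], hP0, hPL, _, _ =>
    simp at hP0 hPL
    subst hP0; subst hPL
    have := Finset.card_le_one.mp hc _ (hsing u₀) _ (hsing v₀)
    exact h0 (Finset.singleton_injective this)
  | P :: P1 :: L, hP0, _, hch, hgood =>
    simp at hP0
    subst hP0
    have hm : IsMerge P P1 := (List.isChain_cons_cons.mp hch).1
    obtain ⟨A, hA, B, hB, hAB, hparts⟩ := hm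
    obtain ⟨u, rfl⟩ := Finset.card_eq_one.mp (hs A hA)
    obtain ⟨v, rfl⟩ := Finset.card_eq_one.mp (hs B hB)
    have huv : u ≠ v := by rintro rfl; exact hAB rfl
    obtain ⟨S, w, hS, hinj, hw⟩ := h u v huv
    have hred := hgood P1 (by simp) ({u} ∪ {v}) (by rw [hparts]; exact Finset.mem_insert_self _ _)
    rw [redDegree_eq] at hred
    refine absurd (hS.trans_le (le_trans ?_ hred)) (lt_irrefl _)
    apply Finset.card_le_card_of_injOn (fun a => ({w a} : Finset V))
    · intro a ha
      obtain ⟨h1, h2, h3⟩ := hw a ha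
      rw [Finset.mem_coe, Finset.mem_filter, Finset.mem_erase, hparts]
      refine ⟨⟨?_, ?_⟩, ?_⟩
      · intro he
        have : u ∈ ({w a} : Finset V) := by
          show u ∈ (fun a => ({w a} : Finset V)) a
          rw [he]; simp
        exact h1 (Finset.mem_singleton.mp this).symm
      · apply Finset.mem_insert_of_mem
        rw [Finset.mem_erase, Finset.mem_erase]
        exact ⟨fun he => h2 (Finset.singleton_injective he),
          fun he => h1 (Finset.singleton_injective he), hsing _⟩
      · rintro (hh | hh)
        · apply h3
          have e1 := hh u (by simp) (w a) (by simp)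
          have e2 := hh v (by simp) (w a) (by simp)
          simp [e1, e2]
        · apply h3
          have e1 := hh u (by simp) (w a) (by simp)
          have e2 := hh v (by simp) (w a) (by simp)
          simp [e1, e2]
    · intro a _ b _ hab
      exact hinj (Finset.singleton_injective hab)

def gridG (k : ℕ) : SimpleGraph (Fin k × Fin k) where
  Adj u w := (u.1 < w.1 ∧ w.2 ≤ u.2) ∨ (w.1 < u.1 ∧ u.2 ≤ w.2)
  symm := ⟨fun u w h => h.symm⟩
  loopless := ⟨fun u h => by
    rcases h with h | h
    · exact lt_irrefl _ h.1
    · exact lt_irrefl _ h.1⟩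

lemma grid_dist (k : ℕ) (u v : Fin k × Fin k) (huv : u ≠ v) :
    ∃ (S : Finset (Fin k)) (w : Fin k → Fin k × Fin k), k - 1 ≤ S.card ∧
      Function.Injective w ∧
      ∀ a ∈ S, w a ≠ u ∧ w a ≠ v ∧ ¬ ((gridG k).Adj u (w a) ↔ (gridG k).Adj v (w a)) := by
  wlog hle : u.2 < v.2 ∨ (u.2 = v.2 ∧ u.1 < v.1) generalizing u v
  · have hle' : v.2 < u.2 ∨ (v.2 = u.2 ∧ v.1 < u.1) := by
      have : ¬ (u.1 = v.1 ∧ u.2 = v.2) := fun h => huv (Prod.ext h.1 h.2)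
      omega
    obtain ⟨S, w, h1, h2, h3⟩ := this v u huv.symm hle'
    exact ⟨S, w, h1, h2, fun a ha => ⟨(h3 a ha).2.1, (h3 a ha).1, fun h => (h3 a ha).2.2 h.symm⟩⟩
  have hcard : ∀ a : Fin k, k - 1 ≤ (Finset.univ.erase a).card := by
    intro a
    rw [Finset.card_erase_of_mem (Finset.mem_univ a)]
    simp
  obtain ⟨i, j⟩ := u
  obtain ⟨i', j'⟩ := v
  simp only at hle
  have hfst : ∀ g : Fin k → Fin k, Function.Injective (fun a => (a, g a)) :=
    fun g a b h => congrArg Prod.fst h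
  have hsnd : ∀ g : Fin k → Fin k, Function.Injective (fun a => (g a, a)) :=
    fun g a b h => congrArg Prod.snd h
  rcases hle with hj | ⟨rfl, hi⟩
  · by_cases hi : i ≤ i'
    · refine ⟨_, fun a => (a, if a ≤ i' then j else j'), hcard i, hfst _, ?_⟩
      intro a ha
      have ha : a ≠ i := Finset.ne_of_mem_erase ha
      simp only [gridG, ne_eq, Prod.mk.injEq]
      split_ifs <;> omega
    · refine ⟨_, fun b => (if b ≤ j' then i else i', b), hcard j, hsnd _, ?_⟩
      intro a ha
      have ha : a ≠ j := Finset.ne_of_mem_erase ha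
      simp only [gridG, ne_eq, Prod.mk.injEq]
      split_ifs <;> omega
  · refine ⟨_, fun b => (if b ≤ j then i' else i, b), hcard j, hsnd _, ?_⟩
    intro a ha
    have ha : a ≠ j := Finset.ne_of_mem_erase ha
    simp only [gridG, ne_eq, Prod.mk.injEq]
    split_ifs <;> omega

def gridH (k : ℕ) : SimpleGraph (Fin (k * k)) := (gridG k).comap finProdFinEquiv.symm

lemma gridH_perm (k : ℕ) : IsPermutationGraph (gridH k) := by
  let e : Fin (k * k) ≃ Fin k × Fin k := finProdFinEquiv.symm
  let g1 : Fin (k * k) → ℕ ×ₗ ℕ := fun u => toLex (((e u).1 : ℕ), ((e u).2 : ℕ))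
  let g2 : Fin (k * k) → ℕ ×ₗ ℕ := fun u => toLex (((e u).2 : ℕ), k - ((e u).1 : ℕ))
  have h1 : Function.Injective g1 := by
    intro u v h
    have h := toLex.injective h
    simp only [Prod.mk.injEq] at h
    exact e.injective (Prod.ext (Fin.ext h.1) (Fin.ext h.2))
  have h2 : Function.Injective g2 := by
    intro u v h
    have h := toLex.injective h
    simp only [Prod.mk.injEq] at h
    have := (e u).1.2
    have := (e v).1.2
    exact e.injective (Prod.ext (Fin.ext (by omega)) (Fin.ext h.1))
  refine ⟨LinearOrder.lift' g1 h1, LinearOrder.lift' g2 h2, ?_⟩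
  intro u v huv
  change (gridG k).Adj (e u) (e v) ↔ (g1 u < g1 v ∧ g2 v < g2 u) ∨ (g1 v < g1 u ∧ g2 u < g2 v)
  simp only [g1, g2, Prod.Lex.toLex_lt_toLex, gridG]
  have := (e u).1.2
  have := (e v).1.2
  omega

lemma gridH_tww (t : ℕ) : ¬ TwinWidthLE (gridH (t + 2)) t := by
  let e : Fin ((t + 2) * (t + 2)) ≃ Fin (t + 2) × Fin (t + 2) := finProdFinEquiv.symm
  apply not_tww _ t (t + 2) (e.symm (0, 0)) (e.symm (0, 1))
  · intro h
    have := congrArg Prod.snd (e.symm.injective h)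
    simp at this
  · intro u v huv
    obtain ⟨S, w, h1, h2, h3⟩ := grid_dist (t + 2) (e u) (e v) (fun h => huv (e.injective h))
    refine ⟨S, fun a => e.symm (w a), by omega, e.symm.injective.comp h2, ?_⟩
    intro a ha
    obtain ⟨a1, a2, a3⟩ := h3 a ha
    refine ⟨fun h => a1 (by rw [← h]; simp), fun h => a2 (by rw [← h]; simp), ?_⟩
    change ¬ ((gridG (t + 2)).Adj (e u) (e (e.symm (w a))) ↔
      (gridG (t + 2)).Adj (e v) (e (e.symm (w a))))
    rw [Equiv.apply_symm_apply]
    exact a3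

open Classical in
lemma rank_exists {m : ℕ} (L : LinearOrder (Fin m)) :
    ∃ x : Fin m → ℕ, (∀ u, x u < m) ∧ ∀ u v, L.lt u v → x u < x v := by
  refine ⟨fun u => (univ.filter fun w => L.lt w u).card, ?_, ?_⟩
  · intro u
    calc _ < (univ : Finset (Fin m)).card := by
          apply Finset.card_lt_card
          rw [Finset.ssubset_iff_of_subset (Finset.filter_subset _ _)]
          refine ⟨u, Finset.mem_univ _, ?_⟩
          rw [Finset.mem_filter]
          exact fun h => @lt_irrefl _ L.toPreorder u h.2
      _ = m := by simp
  · intro u v huv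
    apply Finset.card_lt_card
    rw [Finset.ssubset_iff_of_subset]
    · refine ⟨u, by rw [Finset.mem_filter]; exact ⟨Finset.mem_univ _, huv⟩, ?_⟩
      rw [Finset.mem_filter]
      exact fun h => @lt_irrefl _ L.toPreorder u h.2
    · intro w hw
      rw [Finset.mem_filter] at hw ⊢
      exact ⟨hw.1, @lt_trans _ L.toPreorder _ _ _ hw.2 huv⟩

lemma perm_embed {m n : ℕ} (H : SimpleGraph (Fin m)) (G : SimpleGraph (Fin n)) (l r : Fin n → ℚ)
    (hlr : ∀ v, l v < r v)
    (hadj : ∀ u v : Fin n, u ≠ v →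
      (G.Adj u v ↔ (l u < l v ∧ l v < r u ∧ r u < r v) ∨ (l v < l u ∧ l u < r v ∧ r v < r u)))
    (L1 L2 : LinearOrder (Fin m)) (hH : ∀ u v : Fin m, u ≠ v →
      (H.Adj u v ↔ (L1.lt u v ∧ L2.lt v u) ∨ (L1.lt v u ∧ L2.lt u v)))
    (x y : Option (Fin m) → Fin (m + 2))
    (hx : ∀ u v, L1.lt u v → x (some u) < x (some v))
    (hy : ∀ u v, L2.lt v u → y (some u) < y (some v))
    (hx0 : ∀ u, x (some u) < x none) (hy0 : ∀ u, y none < y (some u))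
    (f : ℚ → ℕ) (hf : Monotone f) (hp : PatIn x y (univ.image (colF l r f))) :
    IsInducedSubgraphOf H G := by
  obtain ⟨p, h1, h2, h3⟩ := hp
  have : ∀ i, ∃ v, colF l r f v = p i := by
    intro i
    obtain ⟨v, _, hv⟩ := Finset.mem_image.mp (h1 i)
    exact ⟨v, hv⟩
  choose w hw using this
  have flt : ∀ {a b : ℚ}, f a < f b → a < b := by
    intro a b h
    by_contra hc
    exact absurd (hf (not_lt.mp hc)) (not_le.mpr h)
  have hX : ∀ i j, x i < x j → f (l (w i)) < f (l (w j)) := by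
    intro i j hij
    have := h2 i j hij
    rw [← hw i, ← hw j] at this
    exact this
  have hY : ∀ i j, y i < y j → f (r (w i)) < f (r (w j)) := by
    intro i j hij
    have := h3 i j hij
    rw [← hw i, ← hw j] at this
    exact this
  have hsep : ∀ u v, l (w (some u)) < r (w (some v)) := by
    intro u v
    have a1 := hX _ _ (hx0 u)
    have a2 := hY _ _ (hy0 v)
    exact ((flt a1).trans (hlr _)).trans (flt a2)
  have tot1 : ∀ u v : Fin m, u ≠ v → L1.lt u v ∨ L1.lt v u := fun u v h =>
    @lt_or_gt_of_ne _ L1 u v h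
  have tot2 : ∀ u v : Fin m, u ≠ v → L2.lt u v ∨ L2.lt v u := fun u v h =>
    @lt_or_gt_of_ne _ L2 u v h
  have hl1 : ∀ u v, L1.lt u v → l (w (some u)) < l (w (some v)) := fun u v h => flt (hX _ _ (hx u v h))
  have hr1 : ∀ u v, L2.lt v u → r (w (some u)) < r (w (some v)) := fun u v h => flt (hY _ _ (hy u v h))
  have hinj : Function.Injective fun u : Fin m => w (some u) := by
    intro u v huv
    by_contra hne
    have huv : w (some u) = w (some v) := huv
    rcases tot1 u v hne with h | h
    · have := hl1 _ _ h; rw [huv] at this; exact lt_irrefl _ this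
    · have := hl1 _ _ h; rw [huv] at this; exact lt_irrefl _ this
  refine ⟨⟨_, hinj⟩, ?_⟩
  intro u v
  by_cases hne : u = v
  · subst hne; simp
  show H.Adj u v ↔ G.Adj (w (some u)) (w (some v))
  rw [hH u v hne, hadj _ _ (fun h => hne (hinj h))]
  have a1 : L1.lt u v ↔ l (w (some u)) < l (w (some v)) :=
    ⟨hl1 u v, fun h => (tot1 u v hne).resolve_right fun h' => lt_asymm h (hl1 _ _ h')⟩
  have a2 : L1.lt v u ↔ l (w (some v)) < l (w (some u)) :=
    ⟨hl1 v u, fun h => (tot1 u v hne).resolve_left fun h' => lt_asymm h (hl1 _ _ h')⟩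
  have a3 : L2.lt v u ↔ r (w (some u)) < r (w (some v)) :=
    ⟨hr1 u v, fun h => (tot2 u v hne).resolve_left fun h' => lt_asymm h (hr1 _ _ h')⟩
  have a4 : L2.lt u v ↔ r (w (some v)) < r (w (some u)) :=
    ⟨hr1 v u, fun h => (tot2 u v hne).resolve_right fun h' => lt_asymm h (hr1 _ _ h')⟩
  rw [a1, a2, a3, a4]
  have := hsep u v
  have := hsep v u
  tauto

/-- A hereditary class of circle graphs has bounded twin-width iff it
excludes some permutation graph. -/
theorem stmt0 (C : ∀ n : ℕ, Set (SimpleGraph (Fin n)))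
    (hher : Hereditary C)
    (hcirc : ∀ n : ℕ, ∀ G ∈ C n, IsCircleGraph G) :
    (∃ t : ℕ, ∀ n : ℕ, ∀ G ∈ C n, TwinWidthLE G t) ↔
      (∃ (m : ℕ) (H : SimpleGraph (Fin m)), IsPermutationGraph H ∧
        ∀ (k : ℕ), ∀ G ∈ C k, ¬ Nonempty (G ≃g H)) := by
  constructor
  · rintro ⟨t, ht⟩
    refine ⟨_, gridH (t + 2), gridH_perm _, ?_⟩
    rintro k G hG ⟨φ⟩
    refine gridH_tww t (ht _ _ (hher _ _ (gridH (t + 2)) G hG ⟨φ.symm.toEquiv.toEmbedding, ?_⟩))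
    intro u v
    exact (φ.symm.map_rel_iff).symm
  · rintro ⟨m, H, ⟨L1, L2, hH⟩, hno⟩
    obtain ⟨c, hc⟩ := marcus_tardos (m + 2) (by omega)
    refine ⟨4 * (8 * c + 1), ?_⟩
    intro n G hG
    obtain ⟨l, r, hlr, hinj, hadj⟩ := hcirc n G hG
    obtain ⟨x, hxm, hx⟩ := rank_exists L1
    obtain ⟨y, hym, hy⟩ := rank_exists L2
    apply circ_tww G l r hinj hadj c
    intro f M hf hfM
    by_contra hcon
    let x' : Option (Fin m) → Fin (m + 2) := fun o =>
      o.elim ⟨m + 1, by omega⟩ (fun u => ⟨x u, by have := hxm u; omega⟩)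
    let y' : Option (Fin m) → Fin (m + 2) := fun o =>
      o.elim ⟨0, by omega⟩ (fun u => ⟨m - y u, by omega⟩)
    apply hcon
    apply hc _ x' y' M
    · intro p hp
      obtain ⟨v, _, rfl⟩ := Finset.mem_image.mp hp
      exact hfM v
    · intro hpat
      have hemb : IsInducedSubgraphOf H G := by
        refine perm_embed H G l r hlr hadj L1 L2 hH x' y' ?_ ?_ ?_ ?_ f hf hpat
        · intro u v h
          have := hx u v h
          simpa [x'] using this
        · intro u v h
          have := hy v u h
          have := hym u
          simp only [y', Option.elim, Fin.mk_lt_mk]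
          omega
        · intro u
          have := hxm u
          simp only [x', Option.elim, Fin.mk_lt_mk]
          omega
        · intro u
          have := hym u
          simp only [y', Option.elim, Fin.mk_lt_mk]
          omega
      exact hno m H (hher m n H G hG hemb) ⟨SimpleGraph.Iso.refl⟩
end

section
/- Let (S, ≤) be a finite linearly ordered set, let η ⊆ S × S be a relation with (s₁,s₂) ∈ η implying s₁ ≤ s₂, and let A be the il-representation matrix of (S, ≤, η). If A admits a (2p+1)-mixed minor, then for every permutation π of {1,…,p} there exist row indices i₁ < i₂ < … < i_p in R (in the lexicographic order on R) and column indices c₁ < c₂ < … < c_p in S such that the p × p submatrix A[{i₁,…,i_p}, {c₁,…,c_p}] equals the permutation matrix of π, each i_k belongs to η, and the first coordinates of i₁,…,i_p are pairwise distinct. -/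
/-- The lexicographic (non-strict) order on pairs over a linear order. -/
def rowLE {S : Type} [LinearOrder S] (i i' : S × S) : Prop :=
  i.1 < i'.1 ∨ (i.1 = i'.1 ∧ i.2 ≤ i'.2)

/-- The lexicographic strict order on pairs over a linear order. -/
def rowLT {S : Type} [LinearOrder S] (i i' : S × S) : Prop :=
  i.1 < i'.1 ∨ (i.1 = i'.1 ∧ i.2 < i'.2)

/-- The row index set `R = η ∪ {(t,t) : t ∈ S}` of the il-representation
matrix. -/
def RowIdx {S : Type} (η : Set (S × S)) : Type :=
  {i : S × S // i ∈ η ∨ i.1 = i.2}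

open scoped Classical in
/-- The entry of the il-representation matrix of `(S, ≤, η)` in row
`i = (s₁, s₂)` and column `j`: it is `2` iff `j < s₁`, it is `1` iff `i ∈ η`
and `j = s₂`, and `0` otherwise. -/
noncomputable def ilEntry {S : Type} [LinearOrder S] (η : Set (S × S))
    (i : S × S) (j : S) : ℕ :=
  if j < i.1 then 2 else if i ∈ η ∧ j = i.2 then 1 else 0

/-- A zone (given by a set of rows and a set of columns) of the
il-representation matrix is mixed: not all of its rows are equal and not all
of its columns are equal. -/
def ZoneMixed {S : Type} [LinearOrder S] (η : Set (S × S))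
    (RI : Set (RowIdx η)) (SJ : Set S) : Prop :=
  (∃ x ∈ RI, ∃ x' ∈ RI, ∃ c ∈ SJ, ilEntry η x.1 c ≠ ilEntry η x'.1 c) ∧
  (∃ c ∈ SJ, ∃ c' ∈ SJ, ∃ x ∈ RI, ilEntry η x.1 c ≠ ilEntry η x.1 c')

/-- The il-representation matrix of `(S, ≤, η)` has a `k`-mixed minor:
the rows (ordered lexicographically) and the columns can be partitioned into
`k` nonempty consecutive intervals each (encoded by monotone surjections onto
`Fin k`) so that each of the `k²` zones is mixed. -/
def HasMixedMinor {S : Type} [LinearOrder S] [Fintype S] (η : Set (S × S)) (k : ℕ) : Prop :=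
  ∃ (f : RowIdx η → Fin k) (g : S → Fin k),
    (∀ x y : RowIdx η, rowLE x.1 y.1 → f x ≤ f y) ∧
    Monotone g ∧
    Function.Surjective f ∧ Function.Surjective g ∧
    ∀ a b : Fin k, ZoneMixed η (f ⁻¹' {a}) (g ⁻¹' {b})

/-- If the il-representation matrix of `(S, ≤, η)` has a `(2p+1)`-mixed minor,
then for every permutation `π` of `{0, …, p-1}` it contains a `p × p`
submatrix equal to the permutation matrix of `π`, whose rows are all in `η`
and have pairwise distinct first coordinates. -/
theorem stmt4 {S : Type} [LinearOrder S] [Fintype S]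
    (η : Set (S × S)) (hη : ∀ i ∈ η, i.1 ≤ i.2)
    (p : ℕ) (hmm : HasMixedMinor η (2 * p + 1)) (π : Equiv.Perm (Fin p)) :
    ∃ (i : Fin p → RowIdx η) (c : Fin p → S),
      (∀ k l : Fin p, k < l → rowLT (i k).1 (i l).1) ∧
      StrictMono c ∧
      (∀ k l : Fin p, ilEntry η (i k).1 (c l) = if l = π k then 1 else 0) ∧
      (∀ k : Fin p, (i k).1 ∈ η) ∧
      Function.Injective (fun k => (i k).1.1) := by
  obtain ⟨f, g, hf, hg, -, -, hz⟩ := hmm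
  have hlt : ∀ x y : RowIdx η, f x < f y → rowLT x.1 y.1 := by
    intro x y h
    by_contra hn
    have : rowLE y.1 x.1 := by
      unfold rowLT at hn
      unfold rowLE
      push Not at hn
      obtain ⟨h1, h2⟩ := hn
      rcases h1.lt_or_eq with h3 | h3
      · exact Or.inl h3
      · exact Or.inr ⟨h3, h2 h3.symm⟩
    exact absurd (hf _ _ this) (not_le.mpr h)
  have hle1 : ∀ x y : RowIdx η, rowLT x.1 y.1 → x.1.1 ≤ y.1.1 := by
    intro x y h
    rcases h with h | h
    · exact h.le
    · exact h.1.le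
  have h0 : ∀ x : RowIdx η, (f x).val < 2 * p → (g x.1.1).val = 0 := by
    intro x hx
    by_contra hne
    obtain ⟨⟨y, hy, y', hy', c, hc, hd⟩, -⟩ := hz (Fin.last (2 * p)) 0
    simp only [Set.mem_preimage, Set.mem_singleton_iff] at hy hy' hc
    have hcx : c < x.1.1 := by
      by_contra h
      have := hg (not_lt.mp h)
      rw [hc, Fin.le_def] at this
      simp at this
      exact hne (by simp [this])
    have key : ∀ y : RowIdx η, f y = Fin.last (2 * p) → c < y.1.1 := by
      intro y hy
      refine lt_of_lt_of_le hcx (hle1 x y (hlt x y ?_))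
      rw [hy, Fin.lt_def]
      simpa using hx
    apply hd
    simp [ilEntry, key y hy, key y' hy']
  have hge : ∀ (x : RowIdx η) (c : S), (f x).val < 2 * p → 0 < (g c).val → ¬ c < x.1.1 := by
    intro x c hx hc h
    have h1 := hg h.le
    have h2 := h0 x hx
    rw [Fin.le_def] at h1
    omega
  have h1 : ∀ a b : Fin (2 * p + 1), a.val < 2 * p → 0 < b.val →
      ∃ x : RowIdx η, x.1 ∈ η ∧ f x = a ∧ g x.1.2 = b := by
    intro a b ha hb
    obtain ⟨-, c, hc, c', hc', x, hx, hd⟩ := hz a b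
    simp only [Set.mem_preimage, Set.mem_singleton_iff] at hx hc hc'
    have n1 := hge x c (by rw [hx]; exact ha) (by rw [hc]; exact hb)
    have n2 := hge x c' (by rw [hx]; exact ha) (by rw [hc']; exact hb)
    simp only [ilEntry, n1, n2, if_false] at hd
    by_cases e1 : x.1 ∈ η ∧ c = x.1.2
    · exact ⟨x, e1.1, hx, by rw [← e1.2, hc]⟩
    · by_cases e2 : x.1 ∈ η ∧ c' = x.1.2
      · exact ⟨x, e2.1, hx, by rw [← e2.2, hc']⟩
      · simp [e1, e2] at hd
  have h2 : ∀ k : Fin p, ∃ x : RowIdx η, x.1 ∈ η ∧ (f x).val = 2 * k.val ∧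
      (g x.1.2).val = (π k).val + 1 := by
    intro k
    obtain ⟨x, hx, ha, hb⟩ := h1 ⟨2 * k.val, by omega⟩ ⟨(π k).val + 1, by omega⟩
      (by simp) (by simp)
    exact ⟨x, hx, by rw [ha], by rw [hb]⟩
  choose i hiη hif hig using h2
  have hfl : ∀ k l : Fin p, k < l → rowLT (i k).1 (i l).1 := by
    intro k l hkl
    apply hlt
    rw [Fin.lt_def] at hkl ⊢
    rw [hif, hif]
    omega
  have hne : ∀ k l : Fin p, k < l → (i k).1.1 ≠ (i l).1.1 := by
    intro k l hkl he
    rw [Fin.lt_def] at hkl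
    obtain ⟨z, -, hza, hzb⟩ := h1 ⟨2 * k.val + 1, by omega⟩ ⟨2 * p, by omega⟩
      (by simp only; omega) (by simp only; omega)
    have a1 := hlt (i k) z (by rw [Fin.lt_def, hif, hza]; simp)
    have a2 := hlt z (i l) (by rw [Fin.lt_def, hif, hza]; simp only; omega)
    have b1 := hle1 _ _ a1
    rcases a2 with a2 | a2
    · exact absurd (lt_of_le_of_lt b1 a2) (by rw [he]; exact lt_irrefl _)
    · have := hg a2.2.le
      rw [hzb, Fin.le_def, hig] at this
      simp only at this
      have := (π l).isLt
      omega
  have hgc : ∀ l : Fin p, (g (i (π.symm l)).1.2).val = l.val + 1 := by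
    intro l
    rw [hig]; simp
  refine ⟨i, fun l => (i (π.symm l)).1.2, hfl, ?_, ?_, hiη, ?_⟩
  · intro k l hkl
    by_contra h
    have := hg (not_lt.mp h)
    rw [Fin.le_def] at this
    simp only [hgc] at this
    rw [Fin.lt_def] at hkl
    omega
  · intro k l
    have n := hge (i k) (i (π.symm l)).1.2 (by rw [hif]; omega) (by rw [hgc]; omega)
    simp only [ilEntry, n, if_false]
    by_cases e : l = π k
    · subst e
      simp [hiη]
    · have : (i (π.symm l)).1.2 ≠ (i k).1.2 := by
        intro h
        have h3 := hgc l
        rw [h, hig] at h3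
        exact e (Fin.ext (by omega))
      simp [e, this]
  · intro k l h
    rcases lt_trichotomy k l with h3 | h3 | h3
    · exact absurd h (hne _ _ h3)
    · exact h3
    · exact absurd h.symm (hne _ _ h3)
end

section
/- Let r ∈ ℕ, s = 2^r, let Y be a finite nonempty set, and let Z = Y^s be the set of s-tuples over Y. For any sets X₁, …, X_r ⊆ Z there exist an index ℓ with 1 ≤ ℓ ≤ s, elements a₁, …, a_{ℓ−1} ∈ Y, and for each y ∈ Y elements b^y_{ℓ+1}, …, b^y_s ∈ Y, such that the set Z₀ = {(a₁, …, a_{ℓ−1}, y, b^y_{ℓ+1}, …, b^y_s) : y ∈ Y} ⊆ Z satisfies, for every i ∈ {1,…,r}, either Z₀ ⊆ X_i or Z₀ ∩ X_i = ∅. -/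
/-- Given `r` subsets `X₁, …, X_r` of `Z = Y^(2^r)`, there is a position `ℓ`,
a prefix `a₁, …, a_{ℓ-1}` and, for each `y ∈ Y`, a suffix
`b^y_{ℓ+1}, …, b^y_s`, such that the set
`Z₀ = {(a₁, …, a_{ℓ-1}, y, b^y_{ℓ+1}, …, b^y_s) : y ∈ Y}` is homogeneous with
respect to every `Xᵢ`: it is contained in `Xᵢ` or disjoint from it. -/
theorem stmt5 (r : ℕ) (Y : Type) [Fintype Y] [Nonempty Y]
    (X : Fin r → Set (Fin (2 ^ r) → Y)) :
    ∃ (ℓ : Fin (2 ^ r)) (a : Fin (2 ^ r) → Y) (b : Y → Fin (2 ^ r) → Y),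
      ∀ i : Fin r,
        (∀ y : Y, (fun k => if k < ℓ then a k else if k = ℓ then y else b y k) ∈ X i) ∨
        (∀ y : Y, (fun k => if k < ℓ then a k else if k = ℓ then y else b y k) ∉ X i) := by
  classical
  have hc : Fintype.card (Fin r → Prop) = 2 ^ r := by simp
  let e : (Fin r → Prop) ≃ Fin (2 ^ r) := Fintype.equivFinOfCardEq hc
  let col : (Fin (2 ^ r) → Y) → (Fin r → Prop) := fun z i => z ∈ X i
  by_contra hcon
  have key : ∀ (ℓ : Fin (2 ^ r)) (a : Fin (2 ^ r) → Y), ∃ y : Y, ∀ b : Fin (2 ^ r) → Y,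
      e (col (fun k => if k < ℓ then a k else if k = ℓ then y else b k)) ≠ ℓ := by
    intro ℓ a
    by_contra hk
    push Not at hk
    choose b hb using hk
    apply hcon
    refine ⟨ℓ, a, b, fun i => ?_⟩
    have h2 : ∀ y : Y, ((fun k => if k < ℓ then a k else if k = ℓ then y else b y k) ∈ X i)
        = e.symm ℓ i := by
      intro y
      have h3 := congrArg e.symm (hb y)
      rw [Equiv.symm_apply_apply] at h3
      exact congrFun h3 i
    by_cases h : e.symm ℓ i
    · left
      intro y
      rw [h2 y]
      exact h
    · right
      intro y hy
      rw [h2 y] at hy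
      exact h hy
  have main : ∀ m : ℕ, m ≤ 2 ^ r → ∃ a : Fin (2 ^ r) → Y, ∀ z : Fin (2 ^ r) → Y,
      (∀ k : Fin (2 ^ r), k.val < m → z k = a k) → m ≤ (e (col z)).val := by
    intro m
    induction m with
    | zero =>
      intro _
      exact ⟨fun _ => Classical.arbitrary Y, fun z _ => Nat.zero_le _⟩
    | succ m ih =>
      intro hm
      obtain ⟨a, ha⟩ := ih (by omega)
      obtain ⟨y, hy⟩ := key ⟨m, by omega⟩ a
      refine ⟨Function.update a ⟨m, by omega⟩ y, fun z hz => ?_⟩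
      have h1 : m ≤ (e (col z)).val := by
        apply ha
        intro k hk
        rw [hz k (by omega), Function.update_of_ne]
        intro h
        rw [h] at hk
        simp at hk
      have h2 := hy z
      have h3 : (fun k => if k < (⟨m, by omega⟩ : Fin (2 ^ r)) then a k
          else if k = ⟨m, by omega⟩ then y else z k) = z := by
        funext k
        split_ifs with h h'
        · have h4 : k.val < m := h
          rw [hz k (by omega), Function.update_of_ne (ne_of_lt h)]
        · subst h'
          rw [hz _ (by simp), Function.update_self]
        · rfl
      rw [h3] at h2
      have h5 : (e (col z)).val ≠ m := fun h => h2 (Fin.ext h)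
      omega
  obtain ⟨a, ha⟩ := main (2 ^ r) le_rfl
  have h1 := ha a (fun _ _ => rfl)
  have h2 := (e (col a)).isLt
  omega
end

section
/- Let (S, ≤) be a finite linearly ordered set, η ⊆ S × S a relation with (s₁,s₂) ∈ η implying s₁ ≤ s₂, and A the il-representation matrix of (S, ≤, η). Then: (i) for all rows x = (s₁,s₂) and y = (t₁,t₂) in R, one has {c ∈ S : a_{x,c} = 2} ⊆ {c ∈ S : a_{y,c} = 2} if and only if s₁ ≤ t₁; (ii) for all x = (s₁,s₂) ∈ η and y = (t₁,t₂) ∈ R, one has (for every c ∈ S, a_{x,c} = 1 implies a_{y,c} ≠ 2) if and only if t₁ ≤ s₂; (iii) for all columns c, c' ∈ S, one has {i ∈ R : a_{i,c} = 2} ⊆ {i ∈ R : a_{i,c'} = 2} if and only if c' ≤ c. -/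
theorem ilEntry_two {S : Type} [LinearOrder S] (η : Set (S × S)) (i : S × S) (j : S) :
    ilEntry η i j = 2 ↔ j < i.1 := by
  unfold ilEntry
  split_ifs <;> simp_all

theorem ilEntry_one {S : Type} [LinearOrder S] (η : Set (S × S)) (hη : ∀ i ∈ η, i.1 ≤ i.2)
    (i : S × S) (j : S) : ilEntry η i j = 1 ↔ i ∈ η ∧ j = i.2 := by
  unfold ilEntry
  split_ifs with h1 h2
  · simp only [OfNat.ofNat_ne_one, false_iff]
    rintro ⟨h, rfl⟩
    exact absurd (hη i h) (not_le.mpr h1)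
  · simp [h2]
  · simp [h2]

/-- Comparisons of interval ends are readable off the il-representation
matrix: (i) containment of the `2`-entry sets of two rows `x = (s₁,s₂)`,
`y = (t₁,t₂)` is equivalent to `s₁ ≤ t₁`; (ii) for `x ∈ η`, the `1`-entry of
row `x` avoiding the `2`-entries of row `y` is equivalent to `t₁ ≤ s₂`;
(iii) containment of the `2`-entry sets of columns `c`, `c'` is equivalent to
`c' ≤ c`. -/
theorem stmt7 {S : Type} [LinearOrder S] [Fintype S]
    (η : Set (S × S)) (hη : ∀ i ∈ η, i.1 ≤ i.2) :
    (∀ x y : RowIdx η,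
      ({c : S | ilEntry η x.1 c = 2} ⊆ {c : S | ilEntry η y.1 c = 2} ↔ x.1.1 ≤ y.1.1)) ∧
    (∀ x y : RowIdx η, x.1 ∈ η →
      ((∀ c : S, ilEntry η x.1 c = 1 → ilEntry η y.1 c ≠ 2) ↔ y.1.1 ≤ x.1.2)) ∧
    (∀ c c' : S,
      ({i : RowIdx η | ilEntry η i.1 c = 2} ⊆ {i : RowIdx η | ilEntry η i.1 c' = 2} ↔ c' ≤ c)) := by
  simp only [ne_eq, ilEntry_two, ilEntry_one η hη, Set.ofPred_subset_ofPred]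
  refine ⟨fun x y => ⟨fun h => ?_, fun h c hc => hc.trans_le h⟩, fun x y hx => ⟨fun h => ?_, ?_⟩,
    fun c c' => ⟨fun h => ?_, fun h i hi => h.trans_lt hi⟩⟩
  · by_contra hn
    exact lt_irrefl _ (h _ (not_le.mp hn))
  · exact not_lt.mp (h _ ⟨hx, rfl⟩)
  · rintro h c ⟨-, rfl⟩
    exact not_lt.mpr h
  · by_contra hn
    exact lt_irrefl _ (h ⟨(c', c'), Or.inr rfl⟩ (not_le.mp hn))
end

section
/- For every p ≥ 1 and every permutation π of {1,…,p}, there exists a finite simple graph H that is an interval graph and exposes π. -/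
/-- `G` is an interval graph: vertices carry closed rational intervals, and
distinct vertices are adjacent iff their intervals intersect. -/
def IsIntervalGraph {n : ℕ} (G : SimpleGraph (Fin n)) : Prop :=
  ∃ l r : Fin n → ℚ, (∀ v, l v ≤ r v) ∧
    ∀ u v : Fin n, u ≠ v →
      (G.Adj u v ↔ max (l u) (l v) ≤ min (r u) (r v))

/-- The graph `H` exposes the permutation `π` of `{0, …, p-1}`. -/
def Exposes {V : Type} {p : ℕ} (H : SimpleGraph V) (π : Equiv.Perm (Fin p)) : Prop :=
  ∃ w w₁ w₂ : Fin p → V,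
    Function.Injective w ∧ Function.Injective w₁ ∧ Function.Injective w₂ ∧
    Disjoint (Set.range w) (Set.range w₁) ∧
    Disjoint (Set.range w) (Set.range w₂) ∧
    Disjoint (Set.range w₁) (Set.range w₂) ∧
    Set.range w ∪ Set.range w₁ ∪ Set.range w₂ = Set.univ ∧
    (∀ i, (H.neighborSet (w i) ∩ Set.range w₁).Nonempty) ∧
    (∀ i, (H.neighborSet (w i) ∩ Set.range w₂).Nonempty) ∧
    (∀ i j : Fin p, i < j →
      H.neighborSet (w i) ∩ Set.range w₁ ⊂ H.neighborSet (w j) ∩ Set.range w₁) ∧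
    (∀ i j : Fin p, i < j →
      H.neighborSet (w (π i)) ∩ Set.range w₂ ⊂ H.neighborSet (w (π j)) ∩ Set.range w₂)

/-- For every permutation `π`, some interval graph exposes `π`. -/
theorem stmt10 (p : ℕ) (hp : 1 ≤ p) (π : Equiv.Perm (Fin p)) :
    ∃ (n : ℕ) (H : SimpleGraph (Fin n)), IsIntervalGraph H ∧ Exposes H π := by
  let e : Fin 3 × Fin p ≃ Fin (3 * p) := finProdFinEquiv
  let L : Fin 3 × Fin p → ℚ := fun x =>
    if x.1 = 0 then -((x.2 : ℕ) + 1 : ℚ) else if x.1 = 1 then -((x.2 : ℕ) + 1 : ℚ)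
      else ((x.2 : ℕ) + 1 : ℚ)
  let R : Fin 3 × Fin p → ℚ := fun x =>
    if x.1 = 0 then ((π.symm x.2 : ℕ) + 1 : ℚ) else if x.1 = 1 then -((x.2 : ℕ) + 1 : ℚ)
      else ((x.2 : ℕ) + 1 : ℚ)
  let H : SimpleGraph (Fin (3 * p)) :=
    { Adj := fun u v => u ≠ v ∧
        max (L (e.symm u)) (L (e.symm v)) ≤ min (R (e.symm u)) (R (e.symm v))
      symm := ⟨fun u v h => ⟨h.1.symm, by rw [max_comm, min_comm]; exact h.2⟩⟩
      loopless := ⟨fun u h => h.1 rfl⟩ }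
  have h1 : ∀ i j : Fin p, H.Adj (e (0, i)) (e (1, j)) ↔ j ≤ i := by
    intro i j
    have a1 : (0 : ℚ) ≤ ((π.symm i : ℕ) : ℚ) := Nat.cast_nonneg _
    have a2 : (0 : ℚ) ≤ ((j : ℕ) : ℚ) := Nat.cast_nonneg _
    have a3 : (0 : ℚ) ≤ ((i : ℕ) : ℚ) := Nat.cast_nonneg _
    have : j ≤ i ↔ ((j : ℕ) : ℚ) ≤ ((i : ℕ) : ℚ) := by rw [Nat.cast_le]; rfl
    rw [this]
    simp only [H, L, R, Equiv.symm_apply_apply, ne_eq, e.injective.eq_iff, Prod.mk.injEq,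
      max_le_iff, le_min_iff]
    simp
    constructor
    · rintro ⟨⟨_, _⟩, _⟩; rw [this]; linarith
    · intro h; rw [this] at h; refine ⟨⟨?_, ?_⟩, ?_⟩ <;> linarith
  have h2 : ∀ i j : Fin p, H.Adj (e (0, i)) (e (2, j)) ↔ j ≤ π.symm i := by
    intro i j
    have a1 : (0 : ℚ) ≤ ((π.symm i : ℕ) : ℚ) := Nat.cast_nonneg _
    have a2 : (0 : ℚ) ≤ ((j : ℕ) : ℚ) := Nat.cast_nonneg _
    have a3 : (0 : ℚ) ≤ ((i : ℕ) : ℚ) := Nat.cast_nonneg _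
    have : j ≤ π.symm i ↔ ((j : ℕ) : ℚ) ≤ ((π.symm i : ℕ) : ℚ) := by rw [Nat.cast_le]; rfl
    rw [this]
    simp only [H, L, R, Equiv.symm_apply_apply, ne_eq, e.injective.eq_iff, Prod.mk.injEq,
      max_le_iff, le_min_iff]
    simp
    constructor
    · intro h; exact h.1.2
    · intro h; refine ⟨⟨?_, h⟩, ?_⟩ <;> linarith
  have inj : ∀ k : Fin 3, Function.Injective fun i : Fin p => e (k, i) := by
    intro k i j h
    simpa using h
  have dis : ∀ k m : Fin 3, k ≠ m →
      Disjoint (Set.range fun i : Fin p => e (k, i)) (Set.range fun i : Fin p => e (m, i)) := by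
    intro k m hkm
    rw [Set.disjoint_left]
    rintro _ ⟨i, rfl⟩ ⟨j, h⟩
    have := e.injective h
    exact hkm (congrArg Prod.fst this).symm
  refine ⟨3 * p, H, ⟨fun v => L (e.symm v), fun v => R (e.symm v), ?_, ?_⟩,
    fun i => e (0, i), fun i => e (1, i), fun i => e (2, i), inj 0, inj 1, inj 2,
    dis 0 1 (by decide), dis 0 2 (by decide), dis 1 2 (by decide), ?_, ?_, ?_, ?_, ?_⟩
  · intro v
    simp only [L, R]
    split_ifs
    · have a1 : (0 : ℚ) ≤ ((π.symm (e.symm v).2 : ℕ) : ℚ) := Nat.cast_nonneg _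
      have a3 : (0 : ℚ) ≤ (((e.symm v).2 : ℕ) : ℚ) := Nat.cast_nonneg _
      linarith
    · exact le_rfl
    · exact le_rfl
  · intro u v huv
    exact ⟨fun h => h.2, fun h => ⟨huv, h⟩⟩
  · rw [Set.eq_univ_iff_forall]
    intro v
    obtain ⟨⟨k, i⟩, rfl⟩ := e.surjective v
    fin_cases k
    · exact Or.inl (Or.inl ⟨i, rfl⟩)
    · exact Or.inl (Or.inr ⟨i, rfl⟩)
    · exact Or.inr ⟨i, rfl⟩
  · intro i
    exact ⟨e (1, i), (h1 i i).2 le_rfl, i, rfl⟩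
  · intro i
    exact ⟨e (2, π.symm i), (h2 i _).2 le_rfl, _, rfl⟩
  · intro i j hij
    refine ⟨?_, fun hs => ?_⟩
    · rintro _ ⟨hx, k, rfl⟩
      exact ⟨(h1 j k).2 (((h1 i k).1 hx).trans hij.le), k, rfl⟩
    · have := hs ⟨(h1 j j).2 le_rfl, j, rfl⟩
      exact absurd ((h1 i j).1 this.1) (not_le.2 hij)
  · intro i j hij
    refine ⟨?_, fun hs => ?_⟩
    · rintro _ ⟨hx, k, rfl⟩
      have := (h2 (π i) k).1 hx
      rw [Equiv.symm_apply_apply] at this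
      exact ⟨(h2 (π j) k).2 (by rw [Equiv.symm_apply_apply]; exact this.trans hij.le), k, rfl⟩
    · have := hs ⟨(h2 (π j) j).2 (by rw [Equiv.symm_apply_apply]), j, rfl⟩
      have := (h2 (π i) j).1 this.1
      rw [Equiv.symm_apply_apply] at this
      exact absurd this (not_le.2 hij)
end

section
/- Let G be the intersection graph of closed rational intervals [l_v, r_v] (l_v ≤ r_v) assigned to its vertices v. Suppose x₁, …, x_p, y₁, …, y_p, z₁, …, z_p are 3p distinct vertices of G such that: l_{x₁} < l_{x₂} < … < l_{x_p}; the values r_{x₁}, …, r_{x_p} are pairwise distinct; l_{x_i} < r_{x_j} for all i, j; for each i, r_{y_i} = l_{x_i}; and for each i, l_{z_i} = r_{x_i}. Let τ be the permutation of {1,…,p} with r_{x_{τ(1)}} < r_{x_{τ(2)}} < … < r_{x_{τ(p)}}. Then the induced subgraph H of G on {x₁,…,x_p} ∪ {y₁,…,y_p} ∪ {z₁,…,z_p} satisfies: N_H(x_k) ∩ {y₁,…,y_p} = {y_i : i ≥ k} and N_H(x_k) ∩ {z₁,…,z_p} = {z_i : r_{x_i} ≤ r_{x_k}} for every k; consequently,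 taking W = {w₁,…,w_p} with w_k = x_{p+1−k}, W₁ = {y₁,…,y_p} and W₂ = {z₁,…,z_p}, the graph H exposes the permutation π of {1,…,p} given by π(j) = p + 1 − τ(j). -/
/-- In an interval graph `G` (given with its interval representation `l`, `r`)
take distinct vertices `x₁, …, x_p`, `y₁, …, y_p`, `z₁, …, z_p` with
increasing left ends of the `x`'s, pairwise distinct right ends of the `x`'s,
every left end of an `x` below every right end of an `x`, and `yᵢ` ending at
the left end of `xᵢ` and `zᵢ` starting at the right end of `xᵢ`.  Let `τ` sort
the right ends of the `x`'s.  Then the neighborhoods of `x_k` among the `y`'s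
and the `z`'s are as described, and consequently the induced subgraph on all
these vertices exposes the permutation `j ↦ p + 1 - τ(j)` (realized `0`-based
as `j ↦ rev (τ j)`), witnessed by `w_k = x_{p+1-k}`, `W₁ = {y₁, …, y_p}`,
`W₂ = {z₁, …, z_p}`. -/
theorem stmt16 {V : Type} [Fintype V] (G : SimpleGraph V)
    (l r : V → ℚ) (hlr : ∀ v, l v ≤ r v)
    (hadj : ∀ u v : V, u ≠ v → (G.Adj u v ↔ max (l u) (l v) ≤ min (r u) (r v)))
    (p : ℕ) (hp : 1 ≤ p)
    (x y z : Fin p → V)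
    (hx : Function.Injective x) (hy : Function.Injective y) (hz : Function.Injective z)
    (hxy : Disjoint (Set.range x) (Set.range y))
    (hxz : Disjoint (Set.range x) (Set.range z))
    (hyz : Disjoint (Set.range y) (Set.range z))
    (hlx : StrictMono (fun i => l (x i)))
    (hrx : Function.Injective (fun i => r (x i)))
    (hlxr : ∀ i j : Fin p, l (x i) < r (x j))
    (hry : ∀ i, r (y i) = l (x i))
    (hlz : ∀ i, l (z i) = r (x i))
    (τ : Equiv.Perm (Fin p)) (hτ : StrictMono (fun k => r (x (τ k)))) :
    (∀ k i : Fin p, G.Adj (x k) (y i) ↔ k ≤ i) ∧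
    (∀ k i : Fin p, G.Adj (x k) (z i) ↔ r (x i) ≤ r (x k)) ∧
    Exposes (G.induce (Set.range x ∪ Set.range y ∪ Set.range z))
      (τ.trans Fin.revPerm) := by
  have nxy : ∀ a b, x a ≠ y b := fun a b h =>
    Set.disjoint_left.1 hxy ⟨a, rfl⟩ ⟨b, h.symm⟩
  have nxz : ∀ a b, x a ≠ z b := fun a b h =>
    Set.disjoint_left.1 hxz ⟨a, rfl⟩ ⟨b, h.symm⟩
  have nyz : ∀ a b, y a ≠ z b := fun a b h =>
    Set.disjoint_left.1 hyz ⟨a, rfl⟩ ⟨b, h.symm⟩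
  have A : ∀ k i : Fin p, G.Adj (x k) (y i) ↔ k ≤ i := by
    intro k i
    rw [hadj _ _ (nxy k i), hry, max_le_iff, le_min_iff, le_min_iff]
    have h1 := hlr (y i)
    rw [hry] at h1
    have h2 := hlxr i k
    have h3 : l (x k) ≤ l (x i) ↔ k ≤ i := hlx.le_iff_le
    rw [← h3]
    exact ⟨fun h => h.1.2, fun h => ⟨⟨hlr _, h⟩, ⟨by linarith, h1⟩⟩⟩
  have B : ∀ k i : Fin p, G.Adj (x k) (z i) ↔ r (x i) ≤ r (x k) := by
    intro k i
    rw [hadj _ _ (nxz k i), hlz, max_le_iff, le_min_iff, le_min_iff]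
    have h1 := hlr (z i)
    rw [hlz] at h1
    have h2 := hlxr k i
    exact ⟨fun h => h.2.1, fun h => ⟨⟨hlr _, by linarith⟩, ⟨h, h1⟩⟩⟩
  refine ⟨A, B, ?_⟩
  refine ⟨fun i => ⟨x (Fin.rev i), Or.inl (Or.inl ⟨_, rfl⟩)⟩,
    fun i => ⟨y i, Or.inl (Or.inr ⟨_, rfl⟩)⟩, fun i => ⟨z i, Or.inr ⟨_, rfl⟩⟩,
    ?_, ?_, ?_, ?_, ?_, ?_, ?_, ?_, ?_, ?_, ?_⟩
  · intro a b h
    exact Fin.rev_injective (hx (congrArg Subtype.val h))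
  · intro a b h
    exact hy (congrArg Subtype.val h)
  · intro a b h
    exact hz (congrArg Subtype.val h)
  · rw [Set.disjoint_left]
    rintro _ ⟨a, rfl⟩ ⟨b, h⟩
    exact nxy _ _ (congrArg Subtype.val h).symm
  · rw [Set.disjoint_left]
    rintro _ ⟨a, rfl⟩ ⟨b, h⟩
    exact nxz _ _ (congrArg Subtype.val h).symm
  · rw [Set.disjoint_left]
    rintro _ ⟨a, rfl⟩ ⟨b, h⟩
    exact nyz _ _ (congrArg Subtype.val h).symm
  · rw [Set.eq_univ_iff_forall]
    rintro ⟨v, (⟨a, rfl⟩ | ⟨a, rfl⟩) | ⟨a, rfl⟩⟩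
    · exact Or.inl (Or.inl ⟨Fin.rev a, Subtype.ext (congrArg x (Fin.rev_rev a))⟩)
    · exact Or.inl (Or.inr ⟨a, rfl⟩)
    · exact Or.inr ⟨a, rfl⟩
  · intro i
    exact ⟨_, (A (Fin.rev i) (Fin.rev i)).2 le_rfl, ⟨Fin.rev i, rfl⟩⟩
  · intro i
    exact ⟨_, (B (Fin.rev i) (Fin.rev i)).2 le_rfl, ⟨Fin.rev i, rfl⟩⟩
  · intro i j hij
    have hr : Fin.rev j < Fin.rev i := Fin.rev_lt_rev.2 hij
    refine ⟨?_, fun hs => ?_⟩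
    · rintro _ ⟨h, ⟨a, rfl⟩⟩
      exact ⟨(A _ _).2 (hr.le.trans ((A _ _).1 h)), ⟨a, rfl⟩⟩
    · have h := (hs ⟨(A (Fin.rev j) (Fin.rev j)).2 le_rfl, ⟨Fin.rev j, rfl⟩⟩).1
      exact absurd ((A _ _).1 h) (not_le.2 hr)
  · intro i j hij
    have hr : r (x (τ i)) < r (x (τ j)) := hτ hij
    simp only [Equiv.trans_apply, Fin.revPerm_apply, Fin.rev_rev]
    refine ⟨?_, fun hs => ?_⟩
    · rintro _ ⟨h, ⟨a, rfl⟩⟩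
      exact ⟨(B _ _).2 (((B _ _).1 h).trans hr.le), ⟨a, rfl⟩⟩
    · have h := (hs ⟨(B (τ j) (τ j)).2 le_rfl, ⟨τ j, rfl⟩⟩).1
      exact absurd ((B _ _).1 h) (not_le.2 hr)
end
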